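/- arXiv:math/0203167 — 2 statements merged into one kernel-verified Lean document; each statement's English description precedes it below -/
import Mathlib

section
/- (Dehornoy) Every braid word in the generators σ_1, …, σ_{n−1} is equivalent (i.e., represents the same element of the braid group B_n) to a braid word that is either σ_1-nonnegative or σ_1-negative. -/
/-- The defining relations of the braid group on `m + 1` strands (`m` generators
`σ_1, …, σ_m`, indexed here by `Fin m`): the commutation relations
`σ_i σ_j = σ_j σ_i` for `|i - j| > 1` and the braid relations
`σ_i σ_{i+1} σ_i = σ_{i+1} σ_i σ_{i+1}`. -/
def braidRels (m : ℕ) : Set (FreeGroup (Fin m)) :=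
  {r | (∃ i j : Fin m, (i : ℕ) + 1 < (j : ℕ) ∧
        r = FreeGroup.of i * FreeGroup.of j * (FreeGroup.of i)⁻¹ * (FreeGroup.of j)⁻¹) ∨
       (∃ i j : Fin m, (i : ℕ) + 1 = (j : ℕ) ∧
        r = FreeGroup.of i * FreeGroup.of j * FreeGroup.of i *
            (FreeGroup.of j * FreeGroup.of i * FreeGroup.of j)⁻¹)}

/-- The index in `Fin n` of the generator `x_i` of `F_n` acted on by `σ_i`
(the strand index `i`, `0`-based). -/
def xL (n : ℕ) (i : Fin (n - 1)) : Fin n := ⟨i, by have := i.isLt; omega⟩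

/-- The index in `Fin n` of the generator `x_{i+1}` of `F_n` acted on by `σ_i`. -/
def xR (n : ℕ) (i : Fin (n - 1)) : Fin n := ⟨(i : ℕ) + 1, by have := i.isLt; omega⟩

namespace Dehor
open FreeGroup

abbrev F := FreeGroup ℕ

lemma toWord_of_red {L : List (ℕ × Bool)} (h : IsReduced L) : (mk L : F).toWord = L := by
  rw [toWord_mk, h.reduce_eq]

/-- the last letter of `q` is not `x_j^{±1}` -/
def Good (q : F) (j : ℕ) : Prop := ∀ L d, q.toWord = L ++ [d] → d.1 ≠ j

/-- number of negative letters -/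
def neg (g : F) : ℕ := g.toWord.countP (fun c => !c.2)

lemma neg_mul_le (a b : F) : neg (a * b) ≤ neg a + neg b := by
  unfold neg
  rw [← List.countP_append]
  exact (toWord_mul_sublist a b).countP_le

lemma invRev_concat (L : List (ℕ × Bool)) (d : ℕ × Bool) :
    invRev (L ++ [d]) = (d.1, !d.2) :: invRev L := by simp [invRev]

lemma mul_letter (g : F) (i : ℕ) (b : Bool) :
    ((g * mk [(i, b)]).toWord = g.toWord ++ [(i, b)]) ∨
    (∃ L, g.toWord = L ++ [(i, !b)] ∧ (g * mk [(i, b)]).toWord = L) := by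
  have hg : IsReduced g.toWord := isReduced_toWord
  have hm : g * mk [(i, b)] = mk (g.toWord ++ [(i, b)]) := by
    conv_lhs => rw [← mk_toWord (x := g)]
    rw [mul_mk]
  by_cases h : ∃ L, g.toWord = L ++ [(i, !b)]
  · right
    obtain ⟨L, hL⟩ := h
    refine ⟨L, hL, ?_⟩
    have hLr : IsReduced L := hg.infix ⟨[], [(i, !b)], by simp [hL]⟩
    have : g * mk [(i, b)] = mk L := by
      rw [hm, hL, ← mul_mk, ← mul_mk, mul_assoc]
      have : (mk [(i, !b)] * mk [(i, b)] : F) = 1 := by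
        rw [mul_mk, one_eq_mk]
        exact Quot.sound (by simp)
      rw [this, mul_one]
    rw [this, toWord_of_red hLr]
  · left
    rw [hm]
    apply toWord_of_red
    refine List.IsChain.append hg (List.isChain_singleton _) ?_
    intro x hx y hy hxy
    simp only [List.head?_cons, Option.mem_def, Option.some.injEq] at hy
    subst hy
    by_contra hne
    apply h
    obtain ⟨L, hL⟩ := List.mem_getLast?_eq_getLast hx |> fun ⟨h1, h2⟩ =>
      (⟨g.toWord.dropLast, by rw [h2, List.dropLast_append_getLast]⟩ : ∃ L, L ++ [x] = g.toWord)
    refine ⟨L, ?_⟩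
    rw [← hL]
    have : x = (i, !b) := by
      ext
      · exact hxy
      · simp at hne ⊢; cases b <;> simp_all
    rw [this]

lemma good_toWord {q : F} {j : ℕ} (b : Bool) (h : Good q j) :
    (q * mk [(j, b)]).toWord = q.toWord ++ [(j, b)] := by
  rcases mul_letter q j b with h1 | ⟨L, h1, _⟩
  · exact h1
  · exact absurd rfl (h L _ h1)

lemma good_red {q : F} {j : ℕ} (b : Bool) (h : Good q j) :
    IsReduced (q.toWord ++ [(j, b)]) := by
  rw [← good_toWord b h]; exact isReduced_toWord

lemma red_invRev {L : List (ℕ × Bool)} (h : IsReduced L) : IsReduced (invRev L) := by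
  have := isReduced_toWord (x := (mk L : F)⁻¹)
  rwa [toWord_inv, toWord_of_red h] at this

lemma good_red' {q : F} {j : ℕ} (b : Bool) (h : Good q j) :
    IsReduced ((j, b) :: invRev q.toWord) := by
  have := red_invRev (good_red (!b) h)
  rw [invRev_concat] at this
  simpa using this

lemma good_red2 {q : F} {j : ℕ} (b : Bool) (h : Good q j) :
    IsReduced (q.toWord ++ (j, b) :: invRev q.toWord) := by
  have := IsReduced.append_overlap (good_red b h) (L₃ := invRev q.toWord)
    (by simpa using good_red' b h) (by simp)
  simpa using this

lemma mk_true (j : ℕ) : (mk [(j, true)] : F) = of j := rfl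
lemma mk_false (j : ℕ) : (mk [(j, false)] : F) = (of j)⁻¹ := rfl

lemma good_conj {q : F} {j : ℕ} (b : Bool) (h : Good q j) :
    (q * mk [(j, b)] * q⁻¹).toWord = q.toWord ++ (j, b) :: invRev q.toWord := by
  have : q * mk [(j, b)] * q⁻¹ = mk (q.toWord ++ (j, b) :: invRev q.toWord) := by
    conv_lhs => rw [← mk_toWord (x := q), inv_mk, mul_mk, mul_mk]
    simp
  rw [this, toWord_of_red (good_red2 b h)]

lemma conj_nf (j : ℕ) : ∀ (n : ℕ) (p : F), p.toWord.length = n →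
    ∃ (q : F) (e : ℤ), p = q * of j ^ e ∧ Good q j := by
  intro n
  induction n using Nat.strong_induction_on with
  | _ n ih =>
    intro p hp
    by_cases hg : Good p j
    · exact ⟨p, 0, by simp, hg⟩
    · unfold Good at hg
      push Not at hg
      obtain ⟨L, d, hL, hd⟩ := hg
      have hLr : IsReduced L := (isReduced_toWord (x := p)).infix ⟨[], [d], by simp [hL]⟩
      obtain ⟨q, e, hq, hgood⟩ := ih L.length (by rw [← hp, hL]; simp) (mk L)
        (by rw [toWord_of_red hLr])
      have hpe : p = mk L * mk [d] := by rw [mul_mk, ← hL, mk_toWord]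
      obtain ⟨i, b⟩ := d
      simp only at hd
      subst hd
      cases b
      · refine ⟨q, e - 1, ?_, hgood⟩
        rw [hpe, hq, mk_false, zpow_sub_one, mul_assoc]
      · refine ⟨q, e + 1, ?_, hgood⟩
        rw [hpe, hq, mk_true, zpow_add_one, mul_assoc]

lemma conj_nf' (p : F) (j : ℕ) : ∃ q, p * of j * p⁻¹ = q * of j * q⁻¹ ∧ Good q j := by
  obtain ⟨q, e, h, hg⟩ := conj_nf j _ p rfl
  refine ⟨q, ?_, hg⟩
  rw [h]
  have : of j ^ e * of j * (of j ^ e)⁻¹ = (of j : F) := by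
    rw [(Commute.refl (of j)).zpow_left e |>.eq]; simp
  calc _ = q * (of j ^ e * of j * (of j ^ e)⁻¹) * q⁻¹ := by group
    _ = _ := by rw [this]

/-- starts with the letter `x_0` -/
def E (g : F) : Prop := ∃ L, g.toWord = (0, true) :: L

lemma E_one : ¬ E 1 := by rintro ⟨L, h⟩; simp at h

lemma E_mul_pos (g : F) (i : ℕ) (hi : i ≠ 0) : E (g * of i) ↔ E g := by
  rw [← mk_true]
  rcases mul_letter g i true with h | ⟨L, h1, h2⟩
  · unfold E; rw [h]
    cases hg : g.toWord with
    | nil => simp [hi]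
    | cons c L => simp
  · unfold E; rw [h1, h2]
    cases L with
    | nil => simp
    | cons c L => simp

lemma E_mul_zero (g : F) : E (g * of 0) ↔ (E g ∨ g = 1) := by
  rw [← mk_true, ← toWord_eq_nil_iff]
  rcases mul_letter g 0 true with h | ⟨L, h1, h2⟩
  · unfold E; rw [h]
    cases hg : g.toWord with
    | nil => simp
    | cons c L => simp
  · unfold E; rw [h1, h2]
    cases L with
    | nil => simp
    | cons c L => simp

lemma neg_mul_pos (g : F) (i : ℕ) : neg (g * of i) ≤ neg g ∧
    (neg (g * of i) = neg g → (g * of i).toWord = g.toWord ++ [(i, true)]) := by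
  rw [← mk_true]
  rcases mul_letter g i true with h | ⟨L, h1, h2⟩
  · refine ⟨?_, fun _ => h⟩
    unfold neg; rw [h]; simp
  · unfold neg; rw [h1, h2]; simp

/-- common prefix -/
lemma common_prefix : ∀ (L M : List (ℕ × Bool)), ∃ c a b, L = c ++ a ∧ M = c ++ b ∧
    (∀ x ∈ a.head?, ∀ y ∈ b.head?, x ≠ y) := by
  intro L
  induction L with
  | nil => intro M; exact ⟨[], [], M, by simp⟩
  | cons x L ih =>
    intro M
    cases M with
    | nil => exact ⟨[], x :: L, [], by simp⟩
    | cons y M =>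
      by_cases h : x = y
      · obtain ⟨c, a, b, h1, h2, h3⟩ := ih M
        exact ⟨x :: c, a, b, by simp [h1], by simp [h2, h], h3⟩
      · exact ⟨[], x :: L, y :: M, by simp, by simp, by simpa using h⟩

end Dehor

namespace Dehor
open FreeGroup

lemma norm_conj_le (p : F) (j : ℕ) : norm (p * of j * p⁻¹) ≤ 2 * norm p + 1 := by
  have h1 := norm_mul_le (p * of j) p⁻¹
  have h2 := norm_mul_le p (of j)
  rw [norm_inv_eq] at h1
  rw [norm_of] at h2
  omega

lemma norm_conj_good {p : F} {j : ℕ} (h : Good p j) :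
    norm (p * of j * p⁻¹) = 2 * p.toWord.length + 1 := by
  unfold FreeGroup.norm
  rw [← mk_true, good_conj true h]
  simp; ring

lemma relaxed_pair {p1 p2 : F} {k1 k2 : ℕ} (g1 : Good p1 k1) (g2 : Good p2 k2)
    (h1 : norm (p2 * of k2 * p2⁻¹) ≤
      norm ((p1 * of k1 * p1⁻¹) * (p2 * of k2 * p2⁻¹) * (p1 * of k1 * p1⁻¹)⁻¹))
    (h2 : norm (p1 * of k1 * p1⁻¹) ≤
      norm ((p2 * of k2 * p2⁻¹)⁻¹ * (p1 * of k1 * p1⁻¹) * (p2 * of k2 * p2⁻¹))) :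
    IsReduced ((k1, true) :: ((p1⁻¹ * p2).toWord ++ [(k2, true)])) := by
  rw [norm_conj_good g2] at h1
  rw [norm_conj_good g1] at h2
  obtain ⟨c, a, b, hc1, hc2, hab⟩ := common_prefix p1.toWord p2.toWord
  have hp1 : p1 = mk c * mk a := by rw [mul_mk, ← hc1, mk_toWord]
  have hp2 : p2 = mk c * mk b := by rw [mul_mk, ← hc2, mk_toWord]
  have ra : IsReduced a := (isReduced_toWord (x := p1)).infix ⟨c, [], by simp [hc1]⟩
  have rb : IsReduced b := (isReduced_toWord (x := p2)).infix ⟨c, [], by simp [hc2]⟩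
  have rab : IsReduced (invRev a ++ b) := by
    refine List.IsChain.append (red_invRev ra) rb ?_
    intro x hx y hy hxy
    cases a with
    | nil => simp at hx
    | cons d a =>
      have : invRev (d :: a) = invRev a ++ [(d.1, !d.2)] := by simp [invRev]
      rw [this] at hx
      simp only [List.getLast?_append, List.getLast?_singleton, Option.some_or, Option.mem_def,
        Option.some.injEq] at hx
      subst hx
      have := hab d (by simp) y hy
      obtain ⟨d1, d2⟩ := d
      obtain ⟨y1, y2⟩ := y
      simp at hxy this ⊢
      have := this hxy
      cases d2 <;> cases y2 <;> simp_all
  have hq : (p1⁻¹ * p2).toWord = invRev a ++ b := by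
    have : p1⁻¹ * p2 = mk (invRev a ++ b) := by
      rw [hp1, hp2, ← mul_mk, ← inv_mk]; group
    rw [this, toWord_of_red rab]
  rw [hq]
  have A : IsReduced ((k1, true) :: (invRev a ++ b)) := by
    refine List.isChain_cons.2 ⟨?_, rab⟩
    intro y hy
    rcases List.eq_nil_or_concat a with rfl | ⟨a', d, rfl⟩
    · cases b with
      | nil => simp at hy
      | cons z b =>
        simp at hy
        subst hy
        obtain ⟨z1, z2⟩ := z
        rintro hz
        simp only at hz
        subst hz
        cases z2
        · exfalso
          have e : (p1 * of k1 * p1⁻¹) * (p2 * of k2 * p2⁻¹) * (p1 * of k1 * p1⁻¹)⁻¹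
              = (mk (c ++ b)) * of k2 * (mk (c ++ b))⁻¹ := by
            have : (mk ((k1, false) :: b) : F) = (of k1)⁻¹ * mk b := by
              rw [← mk_false, mul_mk]; simp
            have h0 : (mk [] : F) = 1 := rfl
            rw [hp1, hp2, this, ← mul_mk, h0]; group
          rw [e] at h1
          have l1 := norm_conj_le (mk (c ++ b)) k2
          have l2 := norm_mk_le (L₁ := c ++ b)
          rw [hc2] at h1
          simp only [List.length_append, List.length_cons] at h1 l2
          omega
        · rfl
    · rw [List.concat_eq_append] at hc1 hy
      rw [invRev_concat] at hy
      simp at hy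
      subst hy
      intro h
      exact absurd h.symm (g1 (c ++ a') d (by simp [hc1]))
  have B : IsReduced ((invRev a ++ b) ++ [(k2, true)]) := by
    refine List.IsChain.append rab (List.isChain_singleton _) ?_
    intro x hx y hy
    simp at hy
    subst hy
    rcases List.eq_nil_or_concat b with rfl | ⟨b', d, rfl⟩
    · cases a with
      | nil => simp at hx
      | cons z a =>
        have : invRev (z :: a) = invRev a ++ [(z.1, !z.2)] := by simp [invRev]
        rw [this] at hx
        simp at hx
        subst hx
        obtain ⟨z1, z2⟩ := z
        rintro hz
        simp only at hz
        subst hz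
        cases z2
        · rfl
        · exfalso
          have e : (p2 * of z1 * p2⁻¹)⁻¹ * (p1 * of k1 * p1⁻¹) * (p2 * of z1 * p2⁻¹)
              = (mk (c ++ a)) * of k1 * (mk (c ++ a))⁻¹ := by
            have : (mk ((z1, true) :: a) : F) = of z1 * mk a := by
              rw [← mk_true, mul_mk]; simp
            have h0 : (mk [] : F) = 1 := rfl
            rw [hp1, hp2, this, ← mul_mk, h0]; group
          rw [e] at h2
          have l1 := norm_conj_le (mk (c ++ a)) k1
          have l2 := norm_mk_le (L₁ := c ++ a)
          rw [hc1] at h2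
          simp only [List.length_append, List.length_cons] at h2 l2
          omega
    · simp at hx
      subst hx
      intro h
      exact absurd h (g2 (c ++ b') d (by simp [hc2]))
  by_cases hn : invRev a ++ b = []
  · rw [hn]
    simp [FreeGroup.IsReduced]
  · have := IsReduced.append_overlap (L₁ := [(k1, true)]) (L₂ := invRev a ++ b)
      (L₃ := [(k2, true)]) (by simpa using A) B hn
    simpa using this

/-- key inequality for relaxed tails -/
lemma tail_ineq (m : ℕ) (p : ℕ → F) (k : ℕ → ℕ) (V : ℕ → F)
    (hV : ∀ i, i ≤ m → V i = p i * of (k i) * (p i)⁻¹ * V (i + 1))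
    (hVm : V (m + 1) = 1)
    (hg : ∀ i, Good (p i) (k i))
    (hr : ∀ i, 1 ≤ i → i < m →
      IsReduced ((k i, true) :: (((p i)⁻¹ * p (i + 1)).toWord ++ [(k (i + 1), true)]))) :
    ∀ d i, i + d = m → 1 ≤ i →
      (∃ L, ((p i)⁻¹ * V i).toWord = (k i, true) :: L) ∧
      neg (p i)⁻¹ ≤ neg ((p i)⁻¹ * V i) := by
  intro d
  induction d with
  | zero =>
    intro i hi h1
    have him : i = m := by omega
    subst him
    have : (p i)⁻¹ * V i = mk ((k i, true) :: invRev (p i).toWord) := by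
      rw [hV i le_rfl, hVm]
      have : (mk ((k i, true) :: invRev (p i).toWord) : F) = of (k i) * (p i)⁻¹ := by
        conv_rhs => rw [← mk_toWord (x := p i), inv_mk, ← mk_true, mul_mk]
        simp
      rw [this]; group
    have h2 : ((p i)⁻¹ * V i).toWord = (k i, true) :: invRev (p i).toWord := by
      rw [this, toWord_of_red (good_red' true (hg i))]
    refine ⟨⟨_, h2⟩, ?_⟩
    unfold neg
    rw [h2, toWord_inv]
    simp
  | succ d ih =>
    intro i hi h1
    obtain ⟨⟨L, hL⟩, hn⟩ := ih (i + 1) (by omega) (by omega)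
    have hri := hr i h1 (by omega)
    have hred : IsReduced ((k i, true) :: (((p i)⁻¹ * p (i + 1)).toWord ++
        ((p (i + 1))⁻¹ * V (i + 1)).toWord)) := by
      have := IsReduced.append_overlap (L₁ := (k i, true) :: ((p i)⁻¹ * p (i + 1)).toWord)
        (L₂ := [(k (i + 1), true)]) (L₃ := L) (by simpa using hri)
        (by rw [List.singleton_append, ← hL]; exact isReduced_toWord) (by simp)
      rw [hL]; simpa using this
    have he : ((p i)⁻¹ * V i) = mk ((k i, true) :: (((p i)⁻¹ * p (i + 1)).toWord ++
        ((p (i + 1))⁻¹ * V (i + 1)).toWord)) := by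
      rw [hV i (by omega)]
      rw [← List.singleton_append, ← mul_mk, ← mul_mk, mk_toWord, mk_toWord, mk_true]
      group
    have h2 := toWord_of_red hred
    rw [← he] at h2
    refine ⟨⟨_, h2⟩, ?_⟩
    have h3 : neg ((p i)⁻¹ * V i) = neg ((p i)⁻¹ * p (i + 1)) +
        neg ((p (i + 1))⁻¹ * V (i + 1)) := by
      conv_lhs => unfold neg
      rw [h2]
      simp [neg]
    have h4 := neg_mul_le ((p i)⁻¹ * p (i + 1)) (p (i + 1))⁻¹
    rw [mul_inv_cancel_right] at h4
    omega

lemma countP_invRev (L : List (ℕ × Bool)) :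
    L.countP (fun c => !c.2) + (invRev L).countP (fun c => !c.2) = L.length := by
  induction L with
  | nil => simp
  | cons c L ih =>
    have : invRev (c :: L) = invRev L ++ [(c.1, !c.2)] := by simp [invRev]
    rw [this]
    obtain ⟨x, b⟩ := c
    cases b <;> simp at ih ⊢ <;> omega

lemma tail_ineq' (m : ℕ) (hm : 1 ≤ m) (p : ℕ → F) (k : ℕ → ℕ) (V : ℕ → F)
    (hV : ∀ i, i ≤ m → V i = p i * of (k i) * (p i)⁻¹ * V (i + 1))
    (hVm : V (m + 1) = 1)
    (hg : ∀ i, Good (p i) (k i))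
    (hr : ∀ i, 1 ≤ i → i < m →
      IsReduced ((k i, true) :: (((p i)⁻¹ * p (i + 1)).toWord ++ [(k (i + 1), true)]))) :
    (∃ L, (V 1).toWord = (p 1).toWord ++ (k 1, true) :: L) ∧
      (p 1).toWord.length ≤ neg (V 1) := by
  obtain ⟨⟨L, hL⟩, hn⟩ := tail_ineq m p k V hV hVm hg hr (m - 1) 1 (by omega) le_rfl
  have hred : IsReduced ((p 1).toWord ++ (k 1, true) :: L) := by
    have := IsReduced.append_overlap (L₃ := L) (good_red true (hg 1))
      (by rw [List.singleton_append, ← hL]; exact isReduced_toWord) (by simp)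
    simpa using this
  have h2 := toWord_of_red hred
  rw [← hL, ← mul_mk, mk_toWord, mk_toWord, mul_inv_cancel_left] at h2
  refine ⟨⟨L, by rw [h2, hL]⟩, ?_⟩
  have h3 : neg (V 1) = neg (p 1) + neg ((p 1)⁻¹ * V 1) := by
    conv_lhs => unfold neg
    rw [h2]; simp [neg]
  have h4 := countP_invRev (p 1).toWord
  rw [← toWord_inv] at h4
  unfold neg at *
  omega

end Dehor

namespace Dehor
open FreeGroup

/-- the action of `σ_i` on the free group -/
def sigF (i : ℕ) : F →* F :=
  FreeGroup.lift fun j => if j = i then of i * of (i + 1) * (of i)⁻¹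
    else if j = i + 1 then of i else of j

/-- the action of `σ_i⁻¹` on the free group -/
def sigInvF (i : ℕ) : F →* F :=
  FreeGroup.lift fun j => if j = i then of (i + 1)
    else if j = i + 1 then (of (i + 1))⁻¹ * of i * of (i + 1) else of j

lemma sigF_self (i : ℕ) : sigF i (of i) = of i * of (i + 1) * (of i)⁻¹ := by simp [sigF]
lemma sigF_succ (i : ℕ) : sigF i (of (i + 1)) = of i := by simp [sigF]
lemma sigF_ne (i j : ℕ) (h1 : j ≠ i) (h2 : j ≠ i + 1) : sigF i (of j) = of j := by
  simp [sigF, h1, h2]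
lemma sigInvF_self (i : ℕ) : sigInvF i (of i) = of (i + 1) := by simp [sigInvF]
lemma sigInvF_succ (i : ℕ) :
    sigInvF i (of (i + 1)) = (of (i + 1))⁻¹ * of i * of (i + 1) := by simp [sigInvF]
lemma sigInvF_ne (i j : ℕ) (h1 : j ≠ i) (h2 : j ≠ i + 1) : sigInvF i (of j) = of j := by
  simp [sigInvF, h1, h2]

def sigA (i : ℕ) : MulAut F :=
  MonoidHom.toMulEquiv (sigF i) (sigInvF i)
    (by
      ext j
      by_cases h1 : j = i
      · subst h1; simp [sigF_self, sigInvF_self, sigInvF_succ, mul_assoc]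
      · by_cases h2 : j = i + 1
        · subst h2; simp [sigF_succ, sigInvF_self]
        · simp [sigF_ne i j h1 h2, sigInvF_ne i j h1 h2])
    (by
      ext j
      by_cases h1 : j = i
      · subst h1; simp [sigF_succ, sigInvF_self]
      · by_cases h2 : j = i + 1
        · subst h2; simp [sigF_self, sigF_succ, sigInvF_succ, mul_assoc]
        · simp [sigF_ne i j h1 h2, sigInvF_ne i j h1 h2])

lemma sigA_apply (i : ℕ) (g : F) : sigA i g = sigF i g := rfl
lemma sigA_inv_apply (i : ℕ) (g : F) : (sigA i)⁻¹ g = sigInvF i g := rfl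

lemma aut_ext {a b : MulAut F} (h : ∀ j, a (of j) = b (of j)) : a = b := by
  apply MulEquiv.toMonoidHom_injective
  ext j
  exact h j

lemma sigA_comm (i j : ℕ) (h : i + 1 < j) : sigA i * sigA j = sigA j * sigA i := by
  apply aut_ext
  intro l
  simp only [MulAut.mul_apply, sigA_apply]
  by_cases h1 : l = i
  · subst h1
    simp [sigF_self, sigF_ne j l (by omega) (by omega), sigF_ne j (l + 1) (by omega) (by omega)]
  · by_cases h2 : l = i + 1
    · subst h2
      simp [sigF_succ, sigF_ne j (i+1) (by omega) (by omega), sigF_ne j i (by omega) (by omega)]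
    · by_cases h3 : l = j
      · subst h3
        simp [sigF_self, sigF_ne i l (by omega) (by omega), sigF_ne i (l + 1) (by omega) (by omega)]
      · by_cases h4 : l = j + 1
        · subst h4
          simp [sigF_succ, sigF_ne i (j+1) (by omega) (by omega),
            sigF_ne i j (by omega) (by omega)]
        · simp [sigF_ne i l h1 h2, sigF_ne j l h3 h4]

lemma sigA_braid (i : ℕ) :
    sigA i * sigA (i + 1) * sigA i = sigA (i + 1) * sigA i * sigA (i + 1) := by
  apply aut_ext
  intro l
  simp only [MulAut.mul_apply, sigA_apply]
  by_cases h1 : l = i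
  · subst h1
    simp [sigF_self, sigF_succ, sigF_ne (l + 1) l (by omega) (by omega),
      sigF_ne l (l + 1 + 1) (by omega) (by omega), mul_assoc]
  · by_cases h2 : l = i + 1
    · subst h2
      simp [sigF_self, sigF_succ, sigF_ne (i + 1) i (by omega) (by omega),
        sigF_ne i (i + 1 + 1) (by omega) (by omega), mul_assoc]
    · by_cases h3 : l = i + 1 + 1
      · subst h3
        simp [sigF_self, sigF_succ, sigF_ne (i + 1) i (by omega) (by omega),
          sigF_ne i (i + 1 + 1) (by omega) (by omega), mul_assoc]
      · simp [sigF_ne i l h1 h2, sigF_ne (i + 1) l h2 h3]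

/-- the braid group with `m` generators -/
abbrev B (m : ℕ) := PresentedGroup (braidRels m)

/-- the generators -/
def s (m i : ℕ) : B m := if h : i < m then PresentedGroup.of ⟨i, h⟩ else 1

lemma s_eq {m : ℕ} (i : Fin m) : s m i = PresentedGroup.of i := by simp [s]

lemma rel_eq_one {m : ℕ} {r : FreeGroup (Fin m)} (h : r ∈ braidRels m) :
    PresentedGroup.mk (braidRels m) r = 1 :=
  (QuotientGroup.eq_one_iff r).2 (Subgroup.subset_normalClosure h)

lemma s_comm {m : ℕ} (i j : ℕ) (h : i + 1 < j) (hj : j < m) :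
    s m i * s m j = s m j * s m i := by
  have hr := rel_eq_one (m := m) (Or.inl ⟨⟨i, by omega⟩, ⟨j, hj⟩, h, rfl⟩)
  simp only [_root_.map_mul, _root_.map_inv] at hr
  have h1 : s m i = PresentedGroup.mk (braidRels m) (of ⟨i, by omega⟩) := by
    simp [s, show i < m by omega]; rfl
  have h2 : s m j = PresentedGroup.mk (braidRels m) (of ⟨j, hj⟩) := by
    simp [s, hj]; rfl
  rw [← h1, ← h2] at hr
  rw [mul_inv_eq_one, mul_inv_eq_iff_eq_mul] at hr
  exact hr

lemma s_braid {m : ℕ} (i : ℕ) (hj : i + 1 < m) :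
    s m i * s m (i + 1) * s m i = s m (i + 1) * s m i * s m (i + 1) := by
  have hr := rel_eq_one (m := m) (Or.inr ⟨⟨i, by omega⟩, ⟨i + 1, hj⟩, rfl, rfl⟩)
  simp only [_root_.map_mul, _root_.map_inv] at hr
  have h1 : s m i = PresentedGroup.mk (braidRels m) (of ⟨i, by omega⟩) := by
    simp [s, show i < m by omega]; rfl
  have h2 : s m (i + 1) = PresentedGroup.mk (braidRels m) (of ⟨i + 1, hj⟩) := by
    simp [s, hj]; rfl
  rw [← h1, ← h2] at hr
  rwa [mul_inv_eq_one] at hr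

/-- a homomorphism out of the braid group -/
def toG {G : Type*} [Group G] (m : ℕ) (f : ℕ → G)
    (hc : ∀ i j, i + 1 < j → f i * f j = f j * f i)
    (hb : ∀ i, f i * f (i + 1) * f i = f (i + 1) * f i * f (i + 1)) : B m →* G :=
  PresentedGroup.toGroup (f := fun i : Fin m => f i) (by
    rintro r (⟨i, j, h, rfl⟩ | ⟨i, j, h, rfl⟩)
    · simp only [_root_.map_mul, _root_.map_inv, lift_apply_of]
      rw [hc i j h]; group
    · simp only [_root_.map_mul, _root_.map_inv, lift_apply_of]
      rw [← h, hb i]; group)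

/-- Artin representation -/
def rho (m : ℕ) : B m →* MulAut F := toG m sigA sigA_comm sigA_braid

lemma rho_s {m i : ℕ} (h : i < m) : rho m (s m i) = sigA i := by
  simp [rho, s, h, toG]

lemma B_ind {m : ℕ} {C : B m → Prop} (h1 : C 1) (hs : ∀ i < m, ∀ b, C b → C (s m i * b))
    (hi : ∀ i < m, ∀ b, C b → C ((s m i)⁻¹ * b)) (b : B m) : C b := by
  have hb : b ∈ Subgroup.closure (Set.range (PresentedGroup.of (rels := braidRels m))) := by
    rw [PresentedGroup.closure_range_of]; trivial
  induction hb using Subgroup.closure_induction_left with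
  | one => exact h1
  | mul_left x hx y hy ih =>
    obtain ⟨i, rfl⟩ := hx
    rw [← s_eq]; exact hs i i.2 _ ih
  | inv_mul_cancel x hx y hy ih =>
    obtain ⟨i, rfl⟩ := hx
    rw [← s_eq]; exact hi i i.2 _ ih

end Dehor

namespace Dehor
open FreeGroup

variable {m : ℕ}

/-- the subgroup generated by `σ_i`, `i ≥ 1` -/
def H (m : ℕ) : Subgroup (B m) := Subgroup.closure {b | ∃ i, 1 ≤ i ∧ i < m ∧ b = s m i}

/-- coset representatives -/
def t (m : ℕ) : ℕ → B m
  | 0 => 1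
  | k + 1 => (s m k)⁻¹ * t m k

/-- the pure braids generating the free factor -/
def A (m k : ℕ) : B m := (t m k)⁻¹ * (s m k * s m k) * t m k

def Phi (m : ℕ) : Subgroup (B m) := Subgroup.closure {b | ∃ k, k < m ∧ b = A m k}

lemma s_mem_H {i : ℕ} (h1 : 1 ≤ i) (h2 : i < m) : s m i ∈ H m :=
  Subgroup.subset_closure ⟨i, h1, h2, rfl⟩

lemma A_mem {k : ℕ} (h : k < m) : A m k ∈ Phi m := Subgroup.subset_closure ⟨k, h, rfl⟩

lemma t_comm (k i : ℕ) (h : k < i) (hi : i < m) : s m i * t m k = t m k * s m i := by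
  induction k with
  | zero => simp [t]
  | succ k ih =>
    have h1 : Commute (s m k) (s m i) := s_comm k i (by omega) hi
    have h2 : Commute (s m i) (t m k) := ih (by omega)
    exact (h1.symm.inv_right.mul_right h2).eq

lemma s_conj (i : ℕ) (h : i + 1 < m) :
    s m i * (s m (i + 1))⁻¹ * (s m i)⁻¹ = (s m (i + 1))⁻¹ * (s m i)⁻¹ * s m (i + 1) := by
  have hb := s_braid i h
  set a := s m i
  set b := s m (i + 1)
  rw [mul_inv_eq_iff_eq_mul, mul_inv_eq_iff_eq_mul]
  calc a = b⁻¹ * a⁻¹ * (a * b * a) := by group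
    _ = _ := by rw [hb]; group

lemma t_shift (i k : ℕ) (h : i + 1 < k) (hk : k ≤ m) : s m i * t m k = t m k * s m (i + 1) := by
  induction k with
  | zero => omega
  | succ k ih =>
    by_cases hik : k = i + 1
    · subst hik
      have h1 := s_conj i (m := m) (by omega)
      have h2 := t_comm i (i + 1) (by omega) (m := m) (by omega)
      simp only [t]
      calc s m i * ((s m (i + 1))⁻¹ * ((s m i)⁻¹ * t m i))
          = (s m i * (s m (i + 1))⁻¹ * (s m i)⁻¹) * t m i := by group
        _ = (s m (i + 1))⁻¹ * (s m i)⁻¹ * (s m (i + 1) * t m i) := by rw [h1]; group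
        _ = _ := by rw [h2]; group
    · have h1 : Commute (s m i) (s m k) := s_comm i k (by omega) (by omega)
      have h2 := ih (by omega) (by omega)
      simp only [t]
      rw [← mul_assoc, h1.inv_right.eq, mul_assoc, h2, mul_assoc]

lemma A_comm_gt (k i : ℕ) (h : k + 1 < i) (hi : i < m) : Commute (s m i) (A m k) := by
  have h1 : Commute (s m i) (t m k) := t_comm k i (by omega) hi
  have h2 : Commute (s m i) (s m k) := (s_comm k i h hi).symm
  exact (h1.inv_right.mul_right (h2.mul_right h2)).mul_right h1

lemma A_comm_lt (k i : ℕ) (h1 : 1 ≤ i) (h : i < k) (hk : k < m) : Commute (s m i) (A m k) := by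
  obtain ⟨i, rfl⟩ : ∃ j, i = j + 1 := ⟨i - 1, by omega⟩
  have h1 := t_shift i k h (m := m) (by omega)
  have h2 : Commute (s m i) (s m k) := s_comm i k h hk
  have e : s m (i + 1) = (t m k)⁻¹ * s m i * t m k := by rw [mul_assoc, h1]; group
  rw [e]
  have h3 := (h2.mul_right h2).eq
  show _ = _
  unfold A
  calc (t m k)⁻¹ * s m i * t m k * ((t m k)⁻¹ * (s m k * s m k) * t m k)
      = (t m k)⁻¹ * (s m i * (s m k * s m k)) * t m k := by group
    _ = _ := by rw [h3]; group

lemma A_succ (k : ℕ) (h : k + 1 < m) :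
    (s m (k + 1))⁻¹ * A m k * s m (k + 1) = A m (k + 1) := by
  have h1 := t_comm k (k + 1) (by omega) h
  have hb := s_braid k h
  unfold A
  simp only [t]
  set a := s m k
  set b := s m (k + 1)
  have e : (t m k)⁻¹ * b⁻¹ = b⁻¹ * (t m k)⁻¹ := by rw [← mul_inv_rev, h1, mul_inv_rev]
  have e2 : b⁻¹ * a * a * b = a * b * b * a⁻¹ := by
    calc b⁻¹ * a * a * b = b⁻¹ * a * (a * b * a) * a⁻¹ := by group
      _ = b⁻¹ * (a * b * a) * b * a⁻¹ := by
          rw [show b⁻¹ * a * (a * b * a) * a⁻¹ = b⁻¹ * a * (b * a * b) * a⁻¹ by rw [hb]]; group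
      _ = _ := by rw [hb]; group
  calc b⁻¹ * ((t m k)⁻¹ * (a * a) * t m k) * b
      = (b⁻¹ * (t m k)⁻¹) * (a * a) * (t m k * b) := by group
    _ = (t m k)⁻¹ * (b⁻¹ * a * a * b) * t m k := by rw [← e, ← h1]; group
    _ = _ := by rw [e2]; group

lemma A_succ' (k : ℕ) (h : k + 1 < m) :
    s m (k + 1) * A m k * (s m (k + 1))⁻¹ = (A m k)⁻¹ * A m (k + 1) * A m k := by
  have h1 := t_comm k (k + 1) (by omega) h
  have hb := s_braid k h
  rw [← A_succ k h]
  unfold A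
  set a := s m k
  set b := s m (k + 1)
  have e : (t m k)⁻¹ * b⁻¹ = b⁻¹ * (t m k)⁻¹ := by rw [← mul_inv_rev, h1, mul_inv_rev]
  have e' : b * (t m k)⁻¹ = (t m k)⁻¹ * b := by
    rw [eq_inv_mul_iff_mul_eq, ← mul_assoc, ← h1]; group
  have e1 : t m k * b⁻¹ = b⁻¹ * t m k := by
    rw [eq_inv_mul_iff_mul_eq, ← mul_assoc, h1]; group
  -- `b a a b⁻¹ = a⁻² b⁻¹ a² b a²`
  have e2 : b * a * a * b⁻¹ = (a * a)⁻¹ * (b⁻¹ * a * a * b) * (a * a) := by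
    have x1 : b⁻¹ * a * a * b = a * b * b * a⁻¹ := by
      calc b⁻¹ * a * a * b = b⁻¹ * a * (a * b * a) * a⁻¹ := by group
        _ = b⁻¹ * (a * b * a) * b * a⁻¹ := by
          rw [show b⁻¹ * a * (a * b * a) * a⁻¹ = b⁻¹ * a * (b * a * b) * a⁻¹ by rw [hb]]; group
        _ = _ := by rw [hb]; group
    rw [x1]
    have x2 : a * b * a⁻¹ = b⁻¹ * a * b := by
      calc a * b * a⁻¹ = b⁻¹ * (b * a * b) * a⁻¹ := by group
        _ = _ := by rw [← hb]; group
    have x3 : b * a * b⁻¹ = a⁻¹ * b * a := by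
      calc b * a * b⁻¹ = a⁻¹ * (a * b * a) * b⁻¹ := by group
        _ = _ := by rw [hb]; group
    calc b * a * a * b⁻¹ = (b * a * b⁻¹) * (b * a * b⁻¹) := by group
      _ = _ := by rw [x3]; group
  calc b * ((t m k)⁻¹ * (a * a) * t m k) * b⁻¹
      = (b * (t m k)⁻¹) * (a * a) * (t m k * b⁻¹) := by group
    _ = (t m k)⁻¹ * (b * a * a * b⁻¹) * t m k := by rw [e', e1]; group
    _ = (t m k)⁻¹ * ((a * a)⁻¹ * (b⁻¹ * a * a * b) * (a * a)) * t m k := by rw [e2]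
    _ = ((t m k)⁻¹ * (a * a) * t m k)⁻¹ *
        (((t m k)⁻¹ * b⁻¹) * (a * a) * (b * t m k)) * ((t m k)⁻¹ * (a * a) * t m k) := by group
    _ = _ := by rw [e, h1]; group

lemma conj_gen (i k : ℕ) (h1 : 1 ≤ i) (hi : i < m) (hk : k < m) :
    s m i * A m k * (s m i)⁻¹ ∈ Phi m ∧ (s m i)⁻¹ * A m k * s m i ∈ Phi m := by
  rcases lt_trichotomy i k with h | h | h
  · have hc := A_comm_lt k i h1 h hk
    rw [hc.eq, hc.inv_left.eq]
    simpa using A_mem hk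
  · subst h
    obtain ⟨i, rfl⟩ : ∃ j, i = j + 1 := ⟨i - 1, by omega⟩
    have x1 := A_succ i hi
    have x2 := A_succ' i hi
    have y1 : s m (i + 1) * A m (i + 1) * (s m (i + 1))⁻¹ = A m i := by rw [← x1]; group
    refine ⟨by rw [y1]; exact A_mem (by omega), ?_⟩
    have y2 : (s m (i + 1))⁻¹ * A m (i + 1) * s m (i + 1)
        = A m (i + 1) * A m i * (A m (i + 1))⁻¹ := by
      have : A m (i + 1) = A m i * (s m (i + 1) * A m i * (s m (i + 1))⁻¹) * (A m i)⁻¹ := by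
        rw [x2]; group
      calc (s m (i + 1))⁻¹ * A m (i + 1) * s m (i + 1)
          = ((s m (i + 1))⁻¹ * A m i * s m (i + 1)) * A m i *
            ((s m (i + 1))⁻¹ * A m i * s m (i + 1))⁻¹ := by
              conv_lhs => rw [this]
              group
        _ = _ := by rw [x1]
    rw [y2]
    exact mul_mem (mul_mem (A_mem hk) (A_mem (by omega))) (inv_mem (A_mem hk))
  · by_cases h' : i = k + 1
    · subst h'
      rw [A_succ k hi, A_succ' k hi]
      exact ⟨mul_mem (mul_mem (inv_mem (A_mem hk)) (A_mem hi)) (A_mem hk), A_mem hi⟩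
    · have hc := A_comm_gt k i (by omega) hi
      rw [hc.eq, hc.inv_left.eq]
      simpa using A_mem hk

lemma conj_phi (i : ℕ) (h1 : 1 ≤ i) (hi : i < m) (f : B m) (hf : f ∈ Phi m) :
    s m i * f * (s m i)⁻¹ ∈ Phi m ∧ (s m i)⁻¹ * f * s m i ∈ Phi m := by
  induction hf using Subgroup.closure_induction with
  | mem x hx => obtain ⟨k, hk, rfl⟩ := hx; exact conj_gen i k h1 hi hk
  | one => simpa using one_mem (Phi m)
  | mul x y _ _ hx hy =>
    constructor
    · convert mul_mem hx.1 hy.1 using 1; group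
    · convert mul_mem hx.2 hy.2 using 1; group
  | inv x _ hx =>
    constructor
    · convert inv_mem hx.1 using 1; group
    · convert inv_mem hx.2 using 1; group

lemma conj_H (h : B m) (hh : h ∈ H m) : ∀ f ∈ Phi m, h * f * h⁻¹ ∈ Phi m := by
  induction hh using Subgroup.closure_induction_left with
  | one => simp
  | mul_left x hx y hy ih =>
    obtain ⟨i, h1, hi, rfl⟩ := hx
    intro f hf
    convert (conj_phi i h1 hi _ (ih f hf)).1 using 1; group
  | inv_mul_cancel x hx y hy ih =>
    obtain ⟨i, h1, hi, rfl⟩ := hx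
    intro f hf
    convert (conj_phi i h1 hi _ (ih f hf)).2 using 1; group

lemma comb_step' {g : B m} {k k' : ℕ} {f0 h0 : B m} (hf0 : f0 ∈ Phi m) (hh0 : h0 ∈ H m)
    (hk' : k' ≤ m) (e : g * t m k = t m k' * f0 * h0) {f h b : B m} (hf : f ∈ Phi m)
    (hh : h ∈ H m) (hb : b = t m k * f * h) :
    ∃ k ≤ m, ∃ f ∈ Phi m, ∃ h ∈ H m, g * b = t m k * f * h := by
  refine ⟨k', hk', f0 * (h0 * f * h0⁻¹), mul_mem hf0 (conj_H h0 hh0 f hf), h0 * h,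
    mul_mem hh0 hh, ?_⟩
  calc g * b = (g * t m k) * f * h := by rw [hb]; group
    _ = _ := by rw [e]; group

lemma comb (b : B m) : ∃ k ≤ m, ∃ f ∈ Phi m, ∃ h ∈ H m, b = t m k * f * h := by
  induction b using B_ind with
  | h1 => exact ⟨0, by omega, 1, one_mem _, 1, one_mem _, by simp [t]⟩
  | hs i hi b ih =>
    obtain ⟨k, hk, f, hf, h, hh, hb⟩ := ih
    rcases lt_trichotomy i k with hik | hik | hik
    · by_cases h2 : k = i + 1
      · subst h2
        refine comb_step' (f0 := 1) (h0 := 1) (k' := i) (one_mem _) (one_mem _) (by omega)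
          ?_ hf hh hb
        simp [t]
      · refine comb_step' (f0 := 1) (h0 := s m (i + 1)) (k' := k) (one_mem _)
          (s_mem_H (by omega) (by omega)) hk ?_ hf hh hb
        rw [t_shift i k (by omega) hk]; simp
    · subst hik
      refine comb_step' (f0 := A m i) (h0 := 1) (k' := i + 1) (A_mem hi)
          (one_mem _) (by omega) ?_ hf hh hb
      simp only [t, A]; group
    · refine comb_step' (f0 := 1) (h0 := s m i) (k' := k) (one_mem _)
          (s_mem_H (by omega) (by omega)) hk ?_ hf hh hb
      rw [t_comm k i (by omega) hi]; simp
  | hi i hi b ih =>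
    obtain ⟨k, hk, f, hf, h, hh, hb⟩ := ih
    rcases lt_trichotomy i k with hik | hik | hik
    · by_cases h2 : k = i + 1
      · subst h2
        refine comb_step' (f0 := (A m i)⁻¹) (h0 := 1) (k' := i) (inv_mem (A_mem hi)) (one_mem _)
          (by omega) ?_ hf hh hb
        simp only [t, A]; group
      · refine comb_step' (f0 := 1) (h0 := (s m (i + 1))⁻¹) (k' := k) (one_mem _)
          (inv_mem (s_mem_H (by omega) (by omega))) hk ?_ hf hh hb
        have := t_shift i k (m := m) (by omega) hk
        rw [inv_mul_eq_iff_eq_mul, mul_one, ← mul_assoc, this]; group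
    · subst hik
      refine comb_step' (f0 := 1) (h0 := 1) (k' := i + 1) (one_mem _)
          (one_mem _) (by omega) ?_ hf hh hb
      simp [t]
    · refine comb_step' (f0 := 1) (h0 := (s m i)⁻¹) (k' := k) (one_mem _)
          (inv_mem (s_mem_H (by omega) (by omega))) hk ?_ hf hh hb
      have := t_comm k i (by omega) hi
      rw [inv_mul_eq_iff_eq_mul, mul_one, ← mul_assoc, this]; group

end Dehor

namespace Dehor
open FreeGroup

variable {m : ℕ}

lemma rho_inv_s {i : ℕ} (h : i < m) : rho m (s m i)⁻¹ = (sigA i)⁻¹ := by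
  rw [_root_.map_inv, rho_s h]

lemma rho_mul (a b : B m) (g : F) : rho m (a * b) g = rho m a (rho m b g) := by
  rw [_root_.map_mul, MulAut.mul_apply]

lemma rho_one (g : F) : rho m 1 g = g := by
  rw [_root_.map_one, MulAut.one_apply]

lemma rho_s_apply {i : ℕ} (h : i < m) (g : F) : rho m (s m i) g = sigF i g := by
  rw [rho_s h, sigA_apply]

lemma rho_inv_s_apply {i : ℕ} (h : i < m) (g : F) : rho m (s m i)⁻¹ g = sigInvF i g := by
  rw [rho_inv_s h, sigA_inv_apply]

lemma sigF_inv (i : ℕ) (g : F) : sigF i (sigInvF i g) = g := by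
  rw [← sigA_apply, ← sigA_inv_apply, ← MulAut.mul_apply]; simp

lemma sigInvF_sigF (i : ℕ) (g : F) : sigInvF i (sigF i g) = g := by
  rw [← sigA_apply, ← sigA_inv_apply, ← MulAut.mul_apply]; simp

/-- `H` fixes `x_0` -/
lemma H_fix (h : B m) (hh : h ∈ H m) : rho m h (of 0) = of 0 := by
  induction hh using Subgroup.closure_induction with
  | mem x hx =>
    obtain ⟨i, h1, hi, rfl⟩ := hx
    rw [rho_s_apply hi, sigF_ne _ _ (by omega) (by omega)]
  | one => rw [rho_one]
  | mul x y _ _ hx hy => rw [rho_mul, hy, hx]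
  | inv x _ hx =>
    conv_lhs => rw [← hx]
    rw [← rho_mul]; simp

lemma rho_t (k : ℕ) (hk : k ≤ m) : rho m (t m k) (of 0) = of k := by
  induction k with
  | zero => simp [t]
  | succ k ih =>
    rw [t, rho_mul, ih (by omega), rho_inv_s_apply (by omega), sigInvF_self]

/-- kill `x_0` -/
def pr : F →* F := FreeGroup.lift fun j => if j = 0 then 1 else of j

lemma pr_zero : pr (of 0) = 1 := by simp [pr]
lemma pr_ne (j : ℕ) (h : j ≠ 0) : pr (of j) = of j := by simp [pr, h]

lemma pr_sigF (i : ℕ) (hi : 1 ≤ i) (g : F) : pr (sigF i g) = sigF i (pr g) := by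
  have : pr.comp (sigF i) = (sigF i).comp pr := by
    ext j
    simp only [MonoidHom.comp_apply]
    by_cases h1 : j = i
    · subst h1; simp [sigF_self, pr_ne j (by omega), pr_ne (j + 1) (by omega)]
    · by_cases h2 : j = i + 1
      · subst h2; simp [sigF_succ, pr_ne i (by omega), pr_ne (i + 1) (by omega)]
      · by_cases h3 : j = 0
        · subst h3; simp [sigF_ne i 0 h1 h2, pr_zero]
        · simp [sigF_ne i j h1 h2, pr_ne j h3]
  exact DFunLike.congr_fun this g

lemma pr_sigInvF (i : ℕ) (hi : 1 ≤ i) (g : F) : pr (sigInvF i g) = sigInvF i (pr g) := by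
  rw [← sigInvF_sigF i (pr (sigInvF i g)), ← pr_sigF i hi, sigF_inv]

def Psi (m : ℕ) : F →* B m := FreeGroup.lift fun j => if j = 0 then 1 else (A m (j - 1))⁻¹

def HasW (f : B m) (W : F) : Prop :=
  rho m f (of 0) = W * of 0 * W⁻¹ ∧ (∀ g, pr (rho m f g) = pr g)

lemma HasW_A (k : ℕ) (hk : k < m) : HasW (A m k) (of 0 * of (k + 1)) := by
  induction k with
  | zero =>
    have e : ∀ g, rho m (A m 0) g = sigF 0 (sigF 0 g) := by
      intro g
      have : A m 0 = s m 0 * s m 0 := by simp [A, t]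
      rw [this, rho_mul, rho_s_apply hk, rho_s_apply hk]
    constructor
    · rw [e, sigF_self]
      have := sigF_succ 0
      simp only [zero_add] at this ⊢
      have h0 := sigF_self 0
      simp only [zero_add] at h0
      simp [h0, this, mul_assoc]
    · intro g
      rw [e]
      have : (pr.comp (sigF 0)).comp (sigF 0) = pr := by
        have := sigF_succ 0
        simp only [zero_add] at this
        have h0 := sigF_self 0
        simp only [zero_add] at h0
        ext j
        simp only [MonoidHom.comp_apply]
        by_cases h1 : j = 0
        · subst h1; simp [h0, this, pr_zero]
        · by_cases h2 : j = 1
          · subst h2; simp [h0, this, pr_zero]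
          · simp [sigF_ne 0 j h1 (by omega)]
      exact DFunLike.congr_fun this g
  | succ k ih =>
    obtain ⟨i1, i2⟩ := ih (by omega)
    rw [← A_succ k hk]
    constructor
    · rw [rho_mul, rho_s_apply hk, sigF_ne _ _ (by omega) (by omega), rho_mul, i1,
        rho_inv_s_apply hk]
      simp only [_root_.map_mul, _root_.map_inv, sigInvF_self,
        sigInvF_ne (k + 1) 0 (by omega) (by omega)]
    · intro g
      rw [rho_mul, rho_mul, rho_inv_s_apply hk, rho_s_apply hk, pr_sigInvF _ (by omega), i2,
        pr_sigF _ (by omega), sigInvF_sigF]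

lemma Phi_W (f : B m) (hf : f ∈ Phi m) : ∃ W, HasW f W ∧ Psi m (pr W) = f⁻¹ := by
  induction hf using Subgroup.closure_induction with
  | mem x hx =>
    obtain ⟨k, hk, rfl⟩ := hx
    refine ⟨_, HasW_A k hk, ?_⟩
    rw [_root_.map_mul, pr_zero, pr_ne _ (by omega)]
    simp [Psi]
  | one => exact ⟨1, ⟨by simp, by simp⟩, by simp⟩
  | mul x y _ _ hx hy =>
    obtain ⟨W, ⟨a1, a2⟩, a3⟩ := hx
    obtain ⟨X, ⟨b1, b2⟩, b3⟩ := hy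
    refine ⟨rho m x X * W, ⟨?_, ?_⟩, ?_⟩
    · rw [rho_mul, b1]; simp only [_root_.map_mul, _root_.map_inv, a1]; group
    · intro g; rw [rho_mul, a2, b2]
    · rw [_root_.map_mul, a2, _root_.map_mul, a3, b3]; group
  | inv x _ hx =>
    obtain ⟨W, ⟨a1, a2⟩, a3⟩ := hx
    have key : ∀ g, pr (rho m x⁻¹ g) = pr g := by
      intro g; rw [← a2 (rho m x⁻¹ g), ← rho_mul]; simp
    refine ⟨rho m x⁻¹ W⁻¹, ⟨?_, key⟩, ?_⟩
    · have : rho m x⁻¹ (rho m x (of 0)) = of 0 := by rw [← rho_mul]; simp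
      rw [a1] at this
      simp only [_root_.map_mul] at this
      generalize rho m x⁻¹ = r at *
      have e : r (of 0) = (r W)⁻¹ * (r W * r (of 0) * r W⁻¹) * (r W⁻¹)⁻¹ := by group
      rw [e, this]
      simp only [_root_.map_inv]
    · rw [key, _root_.map_inv, _root_.map_inv, a3]

lemma centralizer (W : F) (h : W * of 0 * W⁻¹ = of 0) : ∃ e : ℤ, W = of 0 ^ e := by
  obtain ⟨q, e, hW, hg⟩ := conj_nf 0 _ W rfl
  have h1 : q * of 0 * q⁻¹ = of 0 := by
    have : of 0 ^ e * of 0 * (of 0 ^ e)⁻¹ = (of 0 : F) := by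
      rw [(Commute.refl (of 0)).zpow_left e |>.eq]; simp
    calc _ = q * (of 0 ^ e * of 0 * (of 0 ^ e)⁻¹) * q⁻¹ := by rw [this]
      _ = W * of 0 * W⁻¹ := by rw [hW]; group
      _ = _ := h
  have h2 := norm_conj_good hg
  rw [h1, norm_of] at h2
  have h3 : q = 1 := by
    rw [← toWord_eq_nil_iff, ← List.length_eq_zero_iff]; omega
  exact ⟨e, by rw [hW, h3, one_mul]⟩

/-- conjugate generators are equal -/
lemma conj_eq (W : F) (k l : ℕ) (h : W * of k * W⁻¹ = of l) : k = l := by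
  by_contra hne
  let c : F →* Multiplicative ℤ :=
    FreeGroup.lift fun j => if j = k then Multiplicative.ofAdd 1 else 1
  have := congrArg c h
  rw [_root_.map_mul, _root_.map_mul, _root_.map_inv, mul_comm (c W), mul_inv_cancel_right] at this
  simp [c, Ne.symm hne] at this

lemma stab (b : B m) (h : rho m b (of 0) = of 0) : b ∈ H m := by
  obtain ⟨k, hk, f, hf, h', hh, rfl⟩ := comb b
  obtain ⟨W, ⟨a1, a2⟩, a3⟩ := Phi_W f hf
  rw [rho_mul, rho_mul, H_fix _ hh, a1] at h
  have h1 := h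
  simp only [_root_.map_mul, _root_.map_inv, rho_t k hk] at h1
  have hk0 := conj_eq _ _ _ h1
  subst hk0
  simp only [t, _root_.map_one, MulAut.one_apply] at h
  obtain ⟨e, rfl⟩ := centralizer W h
  rw [map_zpow, pr_zero, one_zpow, _root_.map_one] at a3
  have : f = 1 := by rw [← inv_inv f, ← a3, inv_one]
  rw [this]
  simpa [t] using hh

end Dehor

namespace Dehor
open FreeGroup

variable {m : ℕ}

/-- partial products `x_0 ⋯ x_{k-1}` -/
def z : ℕ → F
  | 0 => 1
  | k + 1 => z k * of k

/-- partial products `x_1 ⋯ x_k` -/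
def y : ℕ → F
  | 0 => 1
  | k + 1 => y k * of (k + 1)

lemma z_y (k : ℕ) : z (k + 1) = of 0 * y k := by
  induction k with
  | zero => simp [z, y]
  | succ k ih => rw [z, ih, y, mul_assoc]

lemma sigF_z_le (i k : ℕ) (h : k ≤ i) : sigF i (z k) = z k := by
  induction k with
  | zero => simp [z]
  | succ k ih => rw [z, _root_.map_mul, ih (by omega), sigF_ne i k (by omega) (by omega)]

lemma sigF_z_succ (i : ℕ) : sigF i (z (i + 1)) = z (i + 2) * (of i)⁻¹ := by
  rw [z, _root_.map_mul, sigF_z_le i i le_rfl, sigF_self, z, z]; group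

lemma sigF_z_gt (i d : ℕ) : sigF i (z (i + 2 + d)) = z (i + 2 + d) := by
  induction d with
  | zero =>
    rw [add_zero, z, _root_.map_mul, sigF_z_succ, sigF_succ]; simp [z]
  | succ d ih =>
    rw [← add_assoc, z, _root_.map_mul, ih, sigF_ne i _ (by omega) (by omega)]

lemma sigF_z (i k : ℕ) (h : k ≠ i + 1) : sigF i (z k) = z k := by
  rcases Nat.lt_or_gt_of_ne h with h | h
  · exact sigF_z_le i k (by omega)
  · obtain ⟨d, rfl⟩ : ∃ d, k = i + 2 + d := ⟨k - (i + 2), by omega⟩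
    exact sigF_z_gt i d

lemma rho_z (b : B m) : rho m b (z (m + 1)) = z (m + 1) := by
  induction b using B_ind with
  | h1 => rw [rho_one]
  | hs i hi b ih => rw [rho_mul, ih, rho_s_apply hi, sigF_z _ _ (by omega)]
  | hi i hi b ih =>
    rw [rho_mul, ih, rho_inv_s_apply hi]
    conv_lhs => rw [← sigF_z i (m + 1) (by omega)]
    rw [sigInvF_sigF]

lemma conj_exists (b : B m) : ∀ i, ∃ (p : F) (k : ℕ),
    rho m b (of i) = p * of k * p⁻¹ := by
  induction b using B_ind with
  | h1 => intro i; exact ⟨1, i, by simp⟩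
  | hs j hj b ih =>
    intro i
    obtain ⟨p, k, h⟩ := ih i
    rw [rho_mul, h, rho_s_apply hj]
    simp only [_root_.map_mul, _root_.map_inv]
    by_cases h1 : k = j
    · subst h1; exact ⟨sigF k p * of k, k + 1, by rw [sigF_self]; group⟩
    · by_cases h2 : k = j + 1
      · subst h2; exact ⟨sigF j p, j, by rw [sigF_succ]⟩
      · exact ⟨sigF j p, k, by rw [sigF_ne _ _ h1 h2]⟩
  | hi j hj b ih =>
    intro i
    obtain ⟨p, k, h⟩ := ih i
    rw [rho_mul, h, rho_inv_s_apply hj]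
    simp only [_root_.map_mul, _root_.map_inv]
    by_cases h1 : k = j
    · subst h1; exact ⟨sigInvF k p, k + 1, by rw [sigInvF_self]⟩
    · by_cases h2 : k = j + 1
      · subst h2; exact ⟨sigInvF j p * (of (j + 1))⁻¹, j, by rw [sigInvF_succ]; group⟩
      · exact ⟨sigInvF j p, k, by rw [sigInvF_ne _ _ h1 h2]⟩

lemma conj_good (b : B m) (i : ℕ) : ∃ (p : F) (k : ℕ),
    rho m b (of i) = p * of k * p⁻¹ ∧ Good p k := by
  obtain ⟨p, k, h⟩ := conj_exists b i
  obtain ⟨q, h1, h2⟩ := conj_nf' p k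
  exact ⟨q, k, by rw [h, h1], h2⟩

/-- the `σ_1`-nonnegative submonoid -/
def P (m : ℕ) : Submonoid (B m) :=
  Submonoid.closure {b | b = s m 0 ∨ ∃ i, 1 ≤ i ∧ i < m ∧ (b = s m i ∨ b = (s m i)⁻¹)}

lemma H_le_P (h : B m) (hh : h ∈ H m) : h ∈ P m := by
  induction hh using Subgroup.closure_induction_left with
  | one => exact one_mem _
  | mul_left x hx y hy ih =>
    obtain ⟨i, h1, hi, rfl⟩ := hx
    exact mul_mem (Submonoid.subset_closure (Or.inr ⟨i, h1, hi, Or.inl rfl⟩)) ih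
  | inv_mul_cancel x hx y hy ih =>
    obtain ⟨i, h1, hi, rfl⟩ := hx
    exact mul_mem (Submonoid.subset_closure (Or.inr ⟨i, h1, hi, Or.inr rfl⟩)) ih

lemma sum_pair (f f' : ℕ → ℕ) (m i : ℕ) (hi : i < m)
    (hf : ∀ j, j ≠ i → j ≠ i + 1 → f j = f' j)
    (h : ∑ j ∈ Finset.range (m + 1), f j ≤ ∑ j ∈ Finset.range (m + 1), f' j) :
    f i + f (i + 1) ≤ f' i + f' (i + 1) := by
  have m1 : i ∈ Finset.range (m + 1) := Finset.mem_range.2 (by omega)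
  have m2 : i + 1 ∈ (Finset.range (m + 1)).erase i :=
    Finset.mem_erase.2 ⟨by omega, Finset.mem_range.2 (by omega)⟩
  rw [← Finset.add_sum_erase _ f m1, ← Finset.add_sum_erase _ f' m1,
    ← Finset.add_sum_erase _ f m2, ← Finset.add_sum_erase _ f' m2] at h
  have : ∑ x ∈ ((Finset.range (m + 1)).erase i).erase (i + 1), f x
      = ∑ x ∈ ((Finset.range (m + 1)).erase i).erase (i + 1), f' x := by
    apply Finset.sum_congr rfl
    intro x hx
    rw [Finset.mem_erase, Finset.mem_erase] at hx
    exact hf x hx.2.1 hx.1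
  omega

lemma exists_min (b : B m) : ∃ h ∈ H m, ∀ h' ∈ H m,
    ∑ j ∈ Finset.range (m + 1), FreeGroup.norm (rho m (b * h) (of j)) ≤
    ∑ j ∈ Finset.range (m + 1), FreeGroup.norm (rho m (b * h') (of j)) := by
  classical
  have ex : ∃ n, ∃ h ∈ H m,
      ∑ j ∈ Finset.range (m + 1), FreeGroup.norm (rho m (b * h) (of j)) = n :=
    ⟨_, 1, one_mem _, rfl⟩
  obtain ⟨h, hh, e⟩ := Nat.find_spec ex
  refine ⟨h, hh, fun h' hh' => ?_⟩
  rw [e]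
  exact Nat.find_min' ex ⟨h', hh', rfl⟩

lemma mul_y (a : F) (j : ℕ) : (E (a * y j) ↔ E a) ∧ neg (a * y j) ≤ neg a ∧
    (neg (a * y j) = neg a → ∃ L, (a * y j).toWord = a.toWord ++ L) := by
  induction j with
  | zero => simp [y]
  | succ j ih =>
    obtain ⟨i1, i2, i3⟩ := ih
    rw [y, ← mul_assoc]
    obtain ⟨n1, n2⟩ := neg_mul_pos (a * y j) (j + 1)
    refine ⟨by rw [E_mul_pos _ _ (by omega), i1], by omega, fun h => ?_⟩
    obtain ⟨L, hL⟩ := i3 (by omega)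
    refine ⟨L ++ [(j + 1, true)], ?_⟩
    rw [n2 (by omega), hL, List.append_assoc]

lemma pos_step (hm : 1 ≤ m) (g : B m) (hE : E (rho m g (of 0))) (hne : rho m g (of 0) ≠ of 0)
    (hmin : ∀ h' ∈ H m,
      ∑ j ∈ Finset.range (m + 1), FreeGroup.norm (rho m g (of j)) ≤
      ∑ j ∈ Finset.range (m + 1), FreeGroup.norm (rho m (g * h') (of j))) :
    E (rho m g (of 1)) ∧ FreeGroup.norm (rho m g (of 1)) < FreeGroup.norm (rho m g (of 0)) := by
  choose p k hu hg using conj_good g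
  have hr : ∀ i, 1 ≤ i → i < m →
      IsReduced ((k i, true) :: (((p i)⁻¹ * p (i + 1)).toWord ++ [(k (i + 1), true)])) := by
    intro i h1 hi
    apply relaxed_pair (hg i) (hg (i + 1))
    · rw [← hu, ← hu]
      have := sum_pair _ _ m i hi ?_ (hmin (s m i) (s_mem_H h1 hi))
      · simp only [rho_mul, rho_s_apply hi, sigF_self, sigF_succ] at this
        simp only [_root_.map_mul, _root_.map_inv] at this
        omega
      · intro j j1 j2
        rw [rho_mul, rho_s_apply hi, sigF_ne _ _ j1 j2]
    · rw [← hu, ← hu]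
      have := sum_pair _ _ m i hi ?_ (hmin (s m i)⁻¹ (inv_mem (s_mem_H h1 hi)))
      · simp only [rho_mul, rho_inv_s_apply hi, sigInvF_self, sigInvF_succ] at this
        simp only [_root_.map_mul, _root_.map_inv] at this
        omega
      · intro j j1 j2
        rw [rho_mul, rho_inv_s_apply hi, sigInvF_ne _ _ j1 j2]
  have ht := tail_ineq' m hm p k (fun i => (rho m g (z i))⁻¹ * z (m + 1))
    (by intro i _; rw [← hu, show z (i + 1) = z i * of i from rfl, _root_.map_mul]; group)
    (by rw [rho_z]; group) hg hr
  obtain ⟨⟨L, hL⟩, hn⟩ := ht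
  have w0 : (rho m g (of 0)).toWord = (p 0).toWord ++ (k 0, true) :: invRev (p 0).toWord := by
    rw [hu, ← mk_true, good_conj true (hg 0)]
  have w1 : (rho m g (of 1)).toWord = (p 1).toWord ++ (k 1, true) :: invRev (p 1).toWord := by
    rw [hu, ← mk_true, good_conj true (hg 1)]
  have wi : (rho m g (of 0))⁻¹.toWord
      = (p 0).toWord ++ (k 0, false) :: invRev (p 0).toWord := by
    rw [hu, ← good_conj false (hg 0), mk_false]; congr 1; group
  -- `p 0` begins with `x_0`
  obtain ⟨w', hw'⟩ : ∃ w', (p 0).toWord = (0, true) :: w' := by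
    obtain ⟨M, hM⟩ := hE
    cases hp : (p 0).toWord with
    | nil =>
      exfalso; apply hne
      rw [w0, hp] at hM
      simp at hM
      rw [hu, hM.1, toWord_eq_nil_iff.1 hp]; simp
    | cons c w' =>
      rw [w0, hp] at hM
      simp at hM
      exact ⟨w', by rw [hM.1]⟩
  have hred : IsReduced ((p 0).toWord ++ (k 0, false) :: invRev w') := by
    have h := isReduced_toWord (x := (rho m g (of 0))⁻¹)
    rw [wi] at h
    refine h.infix ⟨[], [(0, false)], ?_⟩
    conv_rhs => rw [hw']
    rw [hw']
    simp [invRev]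
  have ha : ((rho m g (of 0))⁻¹ * of 0).toWord = (p 0).toWord ++ (k 0, false) :: invRev w' := by
    rw [← toWord_of_red hred]; congr 1
    rw [mul_eq_of_eq_mul_inv]
    rw [← mk_toWord (x := (rho m g (of 0))⁻¹), wi, ← mk_false, mul_mk]
    congr 1
    rw [hw']
    simp [invRev]
  have hna : neg ((rho m g (of 0))⁻¹ * of 0) = (p 0).toWord.length := by
    unfold neg
    rw [ha, hw']
    have := countP_invRev w'
    simp at this ⊢
    omega
  have hV1 : (rho m g (z 1))⁻¹ * z (m + 1) = (rho m g (of 0))⁻¹ * of 0 * y m := by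
    rw [z_y m, mul_assoc]; simp [z]
  rw [hV1] at hL hn
  obtain ⟨e1, e2, e3⟩ := mul_y ((rho m g (of 0))⁻¹ * of 0) m
  have hEa : E ((rho m g (of 0))⁻¹ * of 0 * y m) := by
    rw [e1]; unfold E; rw [ha, hw']; simp
  have hlt : (p 1).toWord.length < (p 0).toWord.length := by
    by_contra hcon
    obtain ⟨M, hM⟩ := e3 (by omega)
    rw [hL, ha, List.append_assoc] at hM
    have := (List.append_inj hM (by omega)).2
    simp at this
  constructor
  · obtain ⟨M, hM⟩ := hEa
    rw [hL] at hM
    unfold E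
    rw [w1]
    cases hp : (p 1).toWord with
    | nil => rw [hp] at hM; simp at hM; simp [hM.1]
    | cons c w => rw [hp] at hM; simp at hM; simp [hM.1]
  · unfold FreeGroup.norm
    rw [w0, w1]
    simp
    omega

lemma pos_main (hm : 1 ≤ m) : ∀ (n : ℕ) (b : B m), FreeGroup.norm (rho m b (of 0)) = n →
    E (rho m b (of 0)) → b ∈ P m := by
  intro n
  induction n using Nat.strong_induction_on with
  | _ n ih =>
    intro b hn hE
    by_cases h0 : rho m b (of 0) = of 0
    · exact H_le_P b (stab b h0)
    obtain ⟨h, hh, hmin⟩ := exists_min b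
    have hx : rho m (b * h) (of 0) = rho m b (of 0) := by rw [rho_mul, H_fix h hh]
    have := pos_step hm (b * h) (by rw [hx]; exact hE) (by rw [hx]; exact h0) (by
      intro h' hh'
      rw [mul_assoc]
      exact hmin _ (mul_mem hh hh'))
    rw [hx] at this
    have e : rho m (b * h * (s m 0)⁻¹) (of 0) = rho m (b * h) (of 1) := by
      rw [rho_mul _ (s m 0)⁻¹, rho_inv_s_apply (by omega), sigInvF_self]
    have h2 := ih _ (by rw [← hn]; exact this.2) (b * h * (s m 0)⁻¹) (by rw [e])
      (by rw [e]; exact this.1)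
    have h3 : b = (b * h * (s m 0)⁻¹) * s m 0 * h⁻¹ := by group
    rw [h3]
    exact mul_mem (mul_mem h2 (Submonoid.subset_closure (Or.inl rfl)))
      (H_le_P _ (inv_mem hh))

end Dehor

namespace Dehor
open FreeGroup

variable {m : ℕ}

/-- the mirror homomorphism `σ_i ↦ σ_i⁻¹` -/
def eps (m : ℕ) : B m →* B m :=
  PresentedGroup.toGroup (f := fun i : Fin m => (s m i)⁻¹) (by
    rintro r (⟨i, j, h, rfl⟩ | ⟨i, j, h, rfl⟩)
    · simp only [_root_.map_mul, _root_.map_inv, lift_apply_of]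
      have := s_comm (m := m) i j h j.2
      rw [← mul_inv_rev, ← this]; group
    · simp only [_root_.map_mul, _root_.map_inv, lift_apply_of]
      have hb := s_braid (m := m) i (by rw [h]; exact j.2)
      rw [h] at hb
      have : (s m i)⁻¹ * (s m j)⁻¹ * (s m i)⁻¹ = (s m i * s m j * s m i)⁻¹ := by group
      rw [this, hb]; group)

lemma eps_s {i : ℕ} (h : i < m) : eps m (s m i) = (s m i)⁻¹ := by
  have : s m i = PresentedGroup.of ⟨i, h⟩ := by simp [s, h]
  conv_lhs => rw [this]
  rw [eps, PresentedGroup.toGroup.of]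

lemma eps_eps (b : B m) : eps m (eps m b) = b := by
  induction b using B_ind with
  | h1 => simp
  | hs i hi b ih => simp [eps_s hi, ih]
  | hi i hi b ih => simp [eps_s hi, ih]

/-- mirror on the free group -/
def th : F →* F := FreeGroup.lift fun i => z i * (z (i + 1))⁻¹

lemma th_of (i : ℕ) : th (of i) = z i * (z (i + 1))⁻¹ := by simp [th]

lemma th_z (k : ℕ) : th (z k) = (z k)⁻¹ := by
  induction k with
  | zero => simp [z]
  | succ k ih => 
    rw [show z (k + 1) = z k * of k from rfl, _root_.map_mul, ih, th_of,
      show z (k + 1) = z k * of k from rfl]; group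

lemma th_th (g : F) : th (th g) = g := by
  have : th.comp th = MonoidHom.id F := by
    ext i
    simp only [MonoidHom.comp_apply, th_of, _root_.map_mul, _root_.map_inv, th_z]
    simp [z]
  exact DFunLike.congr_fun this g

lemma th_eq_one (g : F) : th g = 1 ↔ g = 1 := by
  constructor
  · intro h; rw [← th_th g, h, _root_.map_one]
  · rintro rfl; simp

lemma hom_ext_z {f f' : F →* F} (h : ∀ k, f (z k) = f' (z k)) : f = f' := by
  ext i
  have e : (of i : F) = (z i)⁻¹ * z (i + 1) := by simp [z]
  rw [e]; simp only [_root_.map_mul, _root_.map_inv, h]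

lemma th_sigF (i : ℕ) (g : F) : th (sigF i g) = sigInvF i (th g) := by
  have : th.comp (sigF i) = (sigInvF i).comp th := by
    apply hom_ext_z
    intro k
    have hz : ∀ k, k ≠ i + 1 → sigInvF i (z k) = z k := by
      intro k hk
      conv_lhs => rw [← sigF_z i k hk]
      rw [sigInvF_sigF]
    simp only [MonoidHom.comp_apply]
    by_cases h : k = i + 1
    · subst h
      rw [sigF_z_succ, th_z, _root_.map_mul, th_z, _root_.map_inv, th_of,
        _root_.map_inv, show z (i + 1) = z i * of i from rfl, _root_.map_mul, hz i (by omega),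
        sigInvF_self, show z (i + 2) = z i * of i * of (i + 1) from rfl]
      group
    · rw [sigF_z i k h, th_z, _root_.map_inv, hz k h]
  exact DFunLike.congr_fun this g

lemma th_sigInvF (i : ℕ) (g : F) : th (sigInvF i g) = sigF i (th g) := by
  rw [← sigF_inv i (th (sigInvF i g)), ← th_sigF, sigF_inv]

lemma th_rho (b : B m) (g : F) : th (rho m b g) = rho m (eps m b) (th g) := by
  induction b using B_ind with
  | h1 => simp
  | hs i hi b ih =>
    rw [rho_mul, _root_.map_mul (eps m), rho_mul, eps_s hi, rho_s_apply hi, rho_inv_s_apply hi,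
      th_sigF, ih]
  | hi i hi b ih =>
    rw [rho_mul, _root_.map_mul (eps m), rho_mul, _root_.map_inv (eps m), eps_s hi, inv_inv,
      rho_s_apply hi, rho_inv_s_apply hi, th_sigInvF, ih]

def S (g : F) : Prop := (E (th g) ∨ g = 1) ↔ ¬ E g

lemma E_mul_z (h : F) (k : ℕ) : E (h * z (k + 1)) ↔ (E h ∨ h = 1) := by
  rw [z_y, ← mul_assoc, (mul_y _ k).1, E_mul_zero]

lemma S_mul (g : F) (i : ℕ) : S (g * of i) ↔ S g := by
  have key : (E (th (g * of i)) ∨ g * of i = 1) ↔ E (th g * z i) := by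
    rw [← th_eq_one (g * of i), ← E_mul_z _ i]
    rw [_root_.map_mul, th_of]
    rw [show th g * (z i * (z (i + 1))⁻¹) * z (i + 1) = th g * z i by group]
  unfold S
  rw [key]
  cases i with
  | zero =>
    rw [E_mul_zero]
    simp only [z, mul_one]
    by_cases h : g = 1
    · subst h; simp [E_one]
    · simp [h]
  | succ i => rw [E_mul_z, E_mul_pos _ _ (by omega), th_eq_one]

lemma S_mul' (h : F) : ∀ g, S (g * h) ↔ S g := by
  induction h using FreeGroup.induction_on with
  | C1 => intro g; simp
  | of i => intro g; exact S_mul g i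
  | inv_of i _ => intro g; rw [← S_mul _ i]; simp
  | mul a b ha hb => intro g; rw [← mul_assoc, hb, ha]

lemma S_all (g : F) : S g := by
  rw [← one_mul g, S_mul']
  unfold S; simp [E_one]

lemma neg_main (hm : 1 ≤ m) (b : B m) (hE : ¬ E (rho m b (of 0))) : eps m b ∈ P m := by
  apply pos_main hm _ _ rfl
  have e : rho m (eps m b) (of 0) = th (rho m b (of 0))⁻¹ := by
    have : (of 0 : F) = th (of 0)⁻¹ := by rw [_root_.map_inv, th_of]; simp [z]
    conv_lhs => rw [this]
    rw [← th_rho, _root_.map_inv]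
  rw [e]
  obtain ⟨p, k, hu, hg⟩ := conj_good b 0
  have w0 : (rho m b (of 0)).toWord = p.toWord ++ (k, true) :: invRev p.toWord := by
    rw [hu, ← mk_true, good_conj true hg]
  have wi : (rho m b (of 0))⁻¹.toWord = p.toWord ++ (k, false) :: invRev p.toWord := by
    rw [hu, ← good_conj false hg, mk_false]; congr 1; group
  have hne : (rho m b (of 0))⁻¹ ≠ 1 := by
    intro h
    rw [← toWord_eq_nil_iff, wi] at h
    simp at h
  have hE' : ¬ E (rho m b (of 0))⁻¹ := by
    rintro ⟨L, hL⟩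
    apply hE
    unfold E
    rw [wi] at hL
    rw [w0]
    cases hp : p.toWord with
    | nil => rw [hp] at hL; simp at hL
    | cons c w => rw [hp] at hL; simp at hL; simp [hL.1]
  exact ((S_all _).2 hE').resolve_right hne

lemma word_pos (hm : 0 < m) (b : B m) (hb : b ∈ P m) : ∃ w : List (Fin m × Bool),
    b = PresentedGroup.mk (braidRels m) (FreeGroup.mk w) ∧
    ∀ p ∈ w, p ≠ ((⟨0, hm⟩ : Fin m), false) := by
  induction hb using Submonoid.closure_induction with
  | mem x hx =>
    rcases hx with rfl | ⟨i, h1, hi, rfl | rfl⟩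
    · exact ⟨[(⟨0, hm⟩, true)], by simp only [s, hm, dite_true]; rfl, by simp⟩
    · exact ⟨[(⟨i, hi⟩, true)], by simp only [s, hi, dite_true]; rfl, by simp⟩
    · exact ⟨[(⟨i, hi⟩, false)], by simp only [s, hi, dite_true]; rfl, by simp; omega⟩
  | one => exact ⟨[], by simp [← FreeGroup.one_eq_mk], by simp⟩
  | mul x y _ _ hx hy =>
    obtain ⟨a, rfl, ha⟩ := hx
    obtain ⟨c, rfl, hc⟩ := hy
    refine ⟨a ++ c, by rw [← FreeGroup.mul_mk, _root_.map_mul], ?_⟩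
    intro p hp
    rcases List.mem_append.1 hp with h | h
    · exact ha p h
    · exact hc p h

lemma word_neg (hm : 0 < m) (b : B m) (hb : b ∈ P m) : ∃ w : List (Fin m × Bool),
    eps m b = PresentedGroup.mk (braidRels m) (FreeGroup.mk w) ∧
    ∀ p ∈ w, p ≠ ((⟨0, hm⟩ : Fin m), true) := by
  induction hb using Submonoid.closure_induction with
  | mem x hx =>
    rcases hx with rfl | ⟨i, h1, hi, rfl | rfl⟩
    · exact ⟨[(⟨0, hm⟩, false)], by rw [eps_s hm]; simp only [s, hm, dite_true]; rfl, by simp⟩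
    · exact ⟨[(⟨i, hi⟩, false)], by rw [eps_s hi]; simp only [s, hi, dite_true]; rfl, by simp⟩
    · exact ⟨[(⟨i, hi⟩, true)], by
        rw [_root_.map_inv, eps_s hi, inv_inv]; simp only [s, hi, dite_true]; rfl,
        by simp; omega⟩
  | one => exact ⟨[], by simp [← FreeGroup.one_eq_mk], by simp⟩
  | mul x y _ _ hx hy =>
    obtain ⟨a, ea, ha⟩ := hx
    obtain ⟨c, ec, hc⟩ := hy
    refine ⟨a ++ c, by rw [← FreeGroup.mul_mk, _root_.map_mul, _root_.map_mul, ea, ec], ?_⟩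
    intro p hp
    rcases List.mem_append.1 hp with h | h
    · exact ha p h
    · exact hc p h

lemma main (hm : 0 < m) (b : B m) : ∃ w : List (Fin m × Bool),
    b = PresentedGroup.mk (braidRels m) (FreeGroup.mk w) ∧
    ((∀ p ∈ w, p ≠ ((⟨0, hm⟩ : Fin m), false)) ∨ (∀ p ∈ w, p ≠ ((⟨0, hm⟩ : Fin m), true))) := by
  by_cases hE : E (rho m b (of 0))
  · obtain ⟨w, h1, h2⟩ := word_pos hm b (pos_main hm _ b rfl hE)
    exact ⟨w, h1, Or.inl h2⟩
  · obtain ⟨w, h1, h2⟩ := word_neg hm _ (neg_main hm b hE)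
    rw [eps_eps] at h1
    exact ⟨w, h1, Or.inr h2⟩

end Dehor

/-- **Dehornoy's theorem, part (a).** Every braid word in `σ_1, …, σ_{n-1}` (a word in
the letters `σ_i^{±1}`, here a list of pairs `(i, ε)` with `ε = true` for a positive
letter) is equivalent — i.e. represents the same element of the braid group `B_n` —
to a braid word that is either `σ_1`-nonnegative (no occurrence of `σ_1⁻¹`) or
`σ_1`-negative (no occurrence of `σ_1` with positive exponent). -/
theorem dehornoy_sigma1_trichotomy (n : ℕ) (hn : 2 ≤ n)
    (w : List (Fin (n - 1) × Bool)) :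
    ∃ w' : List (Fin (n - 1) × Bool),
      PresentedGroup.mk (braidRels (n - 1)) (FreeGroup.mk w) =
        PresentedGroup.mk (braidRels (n - 1)) (FreeGroup.mk w') ∧
      ((∀ p ∈ w', p ≠ ((⟨0, by omega⟩ : Fin (n - 1)), false)) ∨
       (∀ p ∈ w', p ≠ ((⟨0, by omega⟩ : Fin (n - 1)), true))) := by
  exact Dehor.main (by omega) _
end

section
/- (Dehornoy) If u is a σ_1-nonnegative braid word containing at least one occurrence of σ_1, then u is not equivalent to the empty word, i.e., u represents a nontrivial element of the braid group B_n. -/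
namespace DehornoyProof

open FreeGroup

/-- All letters of the reduced word of `g` avoid the generator `s`. -/
def Av (s : ℕ) (g : FreeGroup ℕ) : Prop := ∀ p ∈ g.toWord, p.1 ≠ s

lemma Av.one (s : ℕ) : Av s 1 := by intro p hp; simp at hp

lemma Av.mul {s : ℕ} {g h : FreeGroup ℕ} (hg : Av s g) (hh : Av s h) : Av s (g * h) := by
  intro p hp
  have := (toWord_mul_sublist g h).subset hp
  rcases List.mem_append.1 this with h1 | h1
  · exact hg p h1
  · exact hh p h1

lemma Av.inv {s : ℕ} {g : FreeGroup ℕ} (hg : Av s g) : Av s g⁻¹ := by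
  intro p hp
  rw [toWord_inv] at hp
  simp only [invRev, List.mem_reverse, List.mem_map] at hp
  obtain ⟨q, hq, rfl⟩ := hp
  exact hg q hq

lemma Av.of {s j : ℕ} (h : j ≠ s) : Av s (FreeGroup.of j) := by
  intro p hp
  simp at hp
  simpa [hp] using h

lemma head_cons (a : ℕ) (b : Bool) (g : FreeGroup ℕ) (h : g.toWord.head? ≠ some (a, !b)) :
    (mk [(a, b)] * g).toWord.head? = some (a, b) := by
  have hr : IsReduced ((a, b) :: g.toWord) := by
    have := isReduced_toWord (x := g)
    cases hL : g.toWord with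
    | nil => exact IsReduced.singleton
    | cons q L =>
      rw [hL] at this h
      refine List.isChain_cons_cons.2 ⟨?_, this⟩
      obtain ⟨q1, q2⟩ := q
      intro h1
      simp only at h1
      subst h1
      simp only [List.head?_cons] at h
      cases b <;> cases q2 <;> simp_all
  have : mk [(a, b)] * g = mk ((a, b) :: g.toWord) := by
    conv_lhs => rw [← mk_toWord (x := g)]
    rw [mul_mk]; rfl
  rw [this, toWord_mk, hr.reduce_eq]; rfl

lemma head_avoid {s : ℕ} {k g : FreeGroup ℕ} (hk : Av s k) (hk1 : k ≠ 1) {e : Bool}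
    (hg : g.toWord.head? = some (s, e)) : ∃ p, (k * g).toWord.head? = some p ∧ p.1 ≠ s := by
  have hne : k.toWord ≠ [] := fun h => hk1 (toWord_eq_nil_iff.1 h)
  have hr : IsReduced (k.toWord ++ g.toWord) := by
    refine List.IsChain.append isReduced_toWord isReduced_toWord ?_
    intro x hx y hy hxy
    rw [hg] at hy
    simp at hy
    subst hy
    exact absurd hxy (hk x (List.mem_of_mem_getLast? hx))
  rw [toWord_mul, hr.reduce_eq]
  cases hL : k.toWord with
  | nil => exact absurd hL hne
  | cons q L =>
    refine ⟨q, by simp, hk q (by simp [hL])⟩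

lemma head_ne_of_av {s : ℕ} {e : Bool} {g : FreeGroup ℕ} (hg : Av s g) :
    g.toWord.head? ≠ some (s, e) := by
  intro h
  exact hg _ (List.mem_of_mem_head? h) rfl

lemma map_letter (θ : FreeGroup ℕ →* FreeGroup ℕ) {t s : ℕ}
    (ht : θ (of t) = of s) (e : Bool) : θ (mk [(t, e)]) = mk [(s, e)] := by
  cases e
  · have h1 : ∀ a : ℕ, (mk [(a, false)] : FreeGroup ℕ) = (of a)⁻¹ := fun a => rfl
    rw [h1, h1, _root_.map_inv, ht]
  · exact ht

lemma map_av (θ : FreeGroup ℕ →* FreeGroup ℕ) {t s : ℕ}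
    (hK : ∀ j, j ≠ t → Av s (θ (of j))) (L : List (ℕ × Bool)) (hL : ∀ p ∈ L, p.1 ≠ t) :
    Av s (θ (mk L)) := by
  induction L with
  | nil => rw [← one_eq_mk, _root_.map_one]; exact Av.one s
  | cons p L ih =>
    have : (mk (p :: L) : FreeGroup ℕ) = mk [p] * mk L := by rw [mul_mk]; rfl
    rw [this, _root_.map_mul]
    refine Av.mul ?_ (ih fun q hq => hL q (List.mem_cons_of_mem _ hq))
    obtain ⟨a, b⟩ := p
    have ha : a ≠ t := hL (a, b) (by simp)
    cases b
    · have h1 : (mk [(a, false)] : FreeGroup ℕ) = (of a)⁻¹ := rfl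
      rw [h1, _root_.map_inv]; exact (hK a ha).inv
    · exact hK a ha

lemma key_list (θ : FreeGroup ℕ →* FreeGroup ℕ) (hinj : Function.Injective θ) {t s : ℕ}
    (ht : θ (of t) = of s) (hK : ∀ j, j ≠ t → Av s (θ (of j)))
    (c : FreeGroup ℕ) (hc : Av s c) (N : ℕ) :
    ∀ (L : List (ℕ × Bool)) (e : Bool), L.length ≤ N → IsReduced ((t, e) :: L) →
      (θ (mk ((t, e) :: L)) * c).toWord.head? = some (s, e) := by
  induction N with
  | zero =>
    intro L e hl _
    have : L = [] := by simpa using hl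
    subst this
    rw [map_letter θ ht]
    exact head_cons _ _ _ (head_ne_of_av hc)
  | succ N ih =>
    intro L e hl hr
    have h1 : (mk ((t, e) :: L) : FreeGroup ℕ) = mk [(t, e)] * mk L := by rw [mul_mk]; rfl
    rw [h1, _root_.map_mul, map_letter θ ht, mul_assoc]
    apply head_cons
    have hrL : IsReduced L := List.IsChain.tail hr
    -- split off the maximal prefix avoiding `t`
    set K := L.takeWhile (fun p => decide (p.1 ≠ t)) with hKdef
    set M := L.dropWhile (fun p => decide (p.1 ≠ t)) with hMdef
    have hKM : K ++ M = L := List.takeWhile_append_dropWhile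
    have hKav : ∀ p ∈ K, p.1 ≠ t := by
      intro p hp
      simpa using List.mem_takeWhile_imp hp
    have hmk : (mk L : FreeGroup ℕ) = mk K * mk M := by rw [mul_mk, hKM]
    have hA : Av s (θ (mk K)) := map_av θ hK K hKav
    rw [hmk, _root_.map_mul]
    cases hM : M with
    | nil =>
      rw [← one_eq_mk, _root_.map_one, mul_one]
      exact head_ne_of_av (hA.mul hc)
    | cons q M' =>
      have hq : q.1 = t := by
        have := List.head?_dropWhile_not (fun p : ℕ × Bool => decide (p.1 ≠ t)) L
        rw [← hMdef, hM] at this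
        simpa using this
      obtain ⟨q1, d⟩ := q
      simp only at hq
      subst hq
      have hlen : M'.length ≤ N := by
        have := congrArg List.length hKM
        rw [hM] at this
        simp at this
        omega
      have hrM : IsReduced ((q1, d) :: M') := by
        rw [← hM]; rw [← hKM] at hrL; exact (List.isChain_append.1 hrL).2.1
      have hhead := ih M' d hlen hrM
      rw [mul_assoc]
      by_cases hKn : K = []
      · rw [hKn, ← one_eq_mk, _root_.map_one, one_mul, hhead]
        have : L = (q1, d) :: M' := by rw [← hKM, hKn, hM]; rfl
        rw [this] at hr
        have := (List.isChain_cons_cons.1 hr).1 rfl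
        simp only at this
        subst this
        simp
      · have hKr : IsReduced K := by
          rw [← hKM] at hrL; exact (List.isChain_append.1 hrL).1
        have hne : θ (mk K) ≠ 1 := by
          intro h
          rw [← _root_.map_one θ] at h
          have h2 := congrArg toWord (hinj h)
          rw [toWord_mk, hKr.reduce_eq, toWord_one] at h2
          exact hKn h2
        obtain ⟨p, hp, hps⟩ := head_avoid hA hne hhead
        rw [hp]
        intro h
        apply hps
        rw [Option.some.inj h]

lemma key (θ : FreeGroup ℕ →* FreeGroup ℕ) (hinj : Function.Injective θ) {t s : ℕ}
    (ht : θ (of t) = of s) (hK : ∀ j, j ≠ t → Av s (θ (of j)))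
    (c : FreeGroup ℕ) (hc : Av s c) (g : FreeGroup ℕ) (e : Bool)
    (hg : g.toWord.head? = some (t, e)) : (θ g * c).toWord.head? = some (s, e) := by
  cases hL : g.toWord with
  | nil => simp [hL] at hg
  | cons q L =>
    rw [hL] at hg
    simp at hg
    subst hg
    have := key_list θ hinj ht hK c hc L.length L e le_rfl (hL ▸ isReduced_toWord)
    rwa [← hL, mk_toWord] at this

/-- The Artin endomorphism. -/
def artF (i : ℕ) : FreeGroup ℕ →* FreeGroup ℕ :=
  lift fun j => if j = i then of i * of (i + 1) * (of i)⁻¹ else if j = i + 1 then of i else of j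

/-- The inverse Artin endomorphism. -/
def artG (i : ℕ) : FreeGroup ℕ →* FreeGroup ℕ :=
  lift fun j => if j = i then of (i + 1) else
    if j = i + 1 then (of (i + 1))⁻¹ * of i * of (i + 1) else of j

lemma artF_self (i : ℕ) : artF i (of i) = of i * of (i + 1) * (of i)⁻¹ := by simp [artF]
lemma artF_succ (i : ℕ) : artF i (of (i + 1)) = of i := by simp [artF]
lemma artF_ne (i j : ℕ) (h : j ≠ i) (h' : j ≠ i + 1) : artF i (of j) = of j := by
  simp [artF, h, h']
lemma artG_self (i : ℕ) : artG i (of i) = of (i + 1) := by simp [artG]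
lemma artG_succ (i : ℕ) : artG i (of (i + 1)) = (of (i + 1))⁻¹ * of i * of (i + 1) := by
  simp [artG]
lemma artG_ne (i j : ℕ) (h : j ≠ i) (h' : j ≠ i + 1) : artG i (of j) = of j := by
  simp [artG, h, h']

/-- The Artin automorphism. -/
def art (i : ℕ) : MulAut (FreeGroup ℕ) :=
  MonoidHom.toMulEquiv (artF i) (artG i)
    (by
      ext j
      simp only [MonoidHom.comp_apply, MonoidHom.id_apply]
      by_cases h : j = i
      · subst h; simp [artF_self, artG_self, artG_succ, mul_assoc]
      by_cases h' : j = i + 1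
      · subst h'; simp [artF_succ, artG_self]
      · rw [artF_ne _ _ h h', artG_ne _ _ h h'])
    (by
      ext j
      simp only [MonoidHom.comp_apply, MonoidHom.id_apply]
      by_cases h : j = i
      · subst h; simp [artF_succ, artG_self]
      by_cases h' : j = i + 1
      · subst h'; simp [artF_succ, artF_self, artG_succ, mul_assoc]
      · rw [artG_ne _ _ h h', artF_ne _ _ h h'])

lemma art_apply (i : ℕ) (g : FreeGroup ℕ) : art i g = artF i g := rfl
lemma art_inv_apply (i : ℕ) (g : FreeGroup ℕ) : (art i)⁻¹ g = artG i g := rfl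

lemma mulAut_ext {a b : MulAut (FreeGroup ℕ)} (h : ∀ j, a (of j) = b (of j)) : a = b := by
  have : a.toMonoidHom = b.toMonoidHom := by
    ext j; exact h j
  ext g
  exact DFunLike.congr_fun this g

lemma art_comm (i j : ℕ) (h : i + 1 < j) : art i * art j = art j * art i := by
  apply mulAut_ext
  intro k
  simp only [MulAut.mul_apply, art_apply]
  by_cases h1 : k = i
  · subst h1
    simp [artF_self, artF_ne j k (by omega) (by omega), artF_ne j (k+1) (by omega) (by omega)]
  by_cases h2 : k = i + 1
  · subst h2
    simp [artF_succ, artF_ne j i (by omega) (by omega), artF_ne j (i+1) (by omega) (by omega)]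
  rw [artF_ne i k h1 h2]
  by_cases h3 : k = j
  · subst h3
    simp [artF_self, artF_ne i k (by omega) (by omega), artF_ne i (k+1) (by omega) (by omega)]
  by_cases h4 : k = j + 1
  · subst h4
    simp [artF_succ, artF_ne i j (by omega) (by omega)]
  rw [artF_ne j k h3 h4, artF_ne i k h1 h2]

lemma art_braid (i : ℕ) :
    art i * art (i + 1) * art i = art (i + 1) * art i * art (i + 1) := by
  apply mulAut_ext
  intro k
  simp only [MulAut.mul_apply, art_apply]
  have e1 := artF_ne (i + 1) i (by omega) (by omega)
  have e2 := artF_ne i (i + 1 + 1) (by omega) (by omega)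
  by_cases h1 : k = i
  · subst h1
    simp [artF_self, artF_succ, e1, e2, mul_assoc]
  by_cases h2 : k = i + 1
  · subst h2
    simp [artF_self, artF_succ, e1, e2, mul_assoc]
  by_cases h3 : k = i + 1 + 1
  · subst h3
    simp [artF_succ, e1, e2]
  simp [artF_ne i k h1 h2, artF_ne (i + 1) k h2 h3]

lemma head_art_pos (i : ℕ) (hi : i ≠ 0) (g : FreeGroup ℕ) (e : Bool)
    (hg : g.toWord.head? = some (0, e)) : (art i g).toWord.head? = some (0, e) := by
  have := key (art i).toMonoidHom (art i).injective (t := 0) (s := 0)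
    (artF_ne i 0 (by omega) (by omega)) ?_ 1 (Av.one 0) g e hg
  · rw [mul_one] at this; exact this
  · intro j hj
    change Av 0 (artF i (of j))
    by_cases h : j = i
    · subst h; rw [artF_self]
      exact ((Av.of hi).mul (Av.of (by omega))).mul (Av.of hi).inv
    by_cases h' : j = i + 1
    · subst h'; rw [artF_succ]; exact Av.of hi
    · rw [artF_ne _ _ h h']; exact Av.of hj

lemma head_art_inv (i : ℕ) (hi : i ≠ 0) (g : FreeGroup ℕ) (e : Bool)
    (hg : g.toWord.head? = some (0, e)) : ((art i)⁻¹ g).toWord.head? = some (0, e) := by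
  have := key (art i)⁻¹.toMonoidHom (art i)⁻¹.injective (t := 0) (s := 0)
    (artG_ne i 0 (by omega) (by omega)) ?_ 1 (Av.one 0) g e hg
  · rw [mul_one] at this; exact this
  · intro j hj
    change Av 0 (artG i (of j))
    by_cases h : j = i
    · subst h; rw [artG_self]; exact Av.of (by omega)
    by_cases h' : j = i + 1
    · subst h'; rw [artG_succ]
      exact ((Av.of (by omega)).inv.mul (Av.of hi)).mul (Av.of (by omega))
    · rw [artG_ne _ _ h h']; exact Av.of hj

lemma head_art_zero (g : FreeGroup ℕ) (e : Bool)
    (hg : g.toWord.head? = some (0, e)) : (art 0 g).toWord.head? = some (0, true) := by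
  let θ : MulAut (FreeGroup ℕ) := MulAut.conj (of 0)⁻¹ * art 0
  have hθ : ∀ x, θ x = (of 0)⁻¹ * artF 0 x * of 0 := by
    intro x
    simp [θ, MulAut.mul_apply, art_apply]
  have := key θ.toMonoidHom θ.injective (t := 0) (s := 1) ?_ ?_
    (of 0)⁻¹ (Av.of (by omega)).inv g e hg
  · have h2 : art 0 g = mk [(0, true)] * (θ g * (of 0)⁻¹) := by
      change _ = of 0 * (θ g * (of 0)⁻¹)
      rw [hθ, art_apply]; group
    rw [h2]
    apply head_cons
    intro h
    have h3 := this.symm.trans h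
    simp at h3
  · change θ (of 0) = _
    rw [hθ, artF_self]; group
  · intro j hj
    change Av 1 (θ (of j))
    rw [hθ]
    refine ((Av.of (by omega)).inv.mul ?_).mul (Av.of (by omega))
    by_cases h' : j = 0 + 1
    · subst h'; rw [artF_succ]; exact Av.of (by omega)
    · rw [artF_ne _ _ hj h']; exact Av.of (by omega)

lemma head_word {m : ℕ} (u : List (Fin m × Bool)) (hu : ∀ p ∈ u, (p.1 : ℕ) = 0 → p.2 = true) :
    ∃ b, ((lift (fun i : Fin m => art i) (mk u)) (of 0)⁻¹).toWord.head? = some (0, b) ∧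
      ((∃ p ∈ u, (p.1 : ℕ) = 0) → b = true) := by
  induction u with
  | nil =>
    refine ⟨false, ?_, by simp⟩
    rw [← one_eq_mk, _root_.map_one, MulAut.one_apply, toWord_inv, toWord_of]; rfl
  | cons p u ih =>
    obtain ⟨b, hb, hb'⟩ := ih fun q hq => hu q (List.mem_cons_of_mem _ hq)
    have h1 : (mk (p :: u) : FreeGroup (Fin m)) = mk [p] * mk u := by rw [mul_mk]; rfl
    have h2 : lift (fun i : Fin m => art i) (mk [p]) = cond p.2 (art p.1) (art p.1)⁻¹ := by
      simp [lift_mk]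
    rw [h1, _root_.map_mul, MulAut.mul_apply, h2]
    by_cases hp : (p.1 : ℕ) = 0
    · refine ⟨true, ?_, fun _ => rfl⟩
      rw [hu p (by simp) hp, hp]
      exact head_art_zero _ _ hb
    · refine ⟨b, ?_, ?_⟩
      · cases p.2
        · exact head_art_inv _ hp _ _ hb
        · exact head_art_pos _ hp _ _ hb
      · rintro ⟨q, hq, hq0⟩
        rcases List.mem_cons.1 hq with rfl | hq
        · exact absurd hq0 hp
        · exact hb' ⟨q, hq, hq0⟩

lemma rels_hold {m : ℕ} : ∀ r ∈ braidRels m, lift (fun i : Fin m => art i) r = 1 := by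
  rintro r (⟨i, j, hij, rfl⟩ | ⟨i, j, hij, rfl⟩)
  · simp only [_root_.map_mul, _root_.map_inv, lift_apply_of]
    rw [art_comm _ _ hij]; group
  · simp only [_root_.map_mul, _root_.map_inv, lift_apply_of]
    rw [← hij, art_braid, mul_inv_cancel]

end DehornoyProof


/-- **Dehornoy's theorem, part (b).** If `u` is a `σ_1`-nonnegative braid word (no
occurrence of `σ_1⁻¹`) containing at least one occurrence of `σ_1`, then `u`
represents a nontrivial element of the braid group `B_n`. -/
theorem dehornoy_sigma1_positive_nontrivial (n : ℕ) (hn : 2 ≤ n)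
    (u : List (Fin (n - 1) × Bool))
    (hnonneg : ∀ p ∈ u, p ≠ ((⟨0, by omega⟩ : Fin (n - 1)), false))
    (hocc : ((⟨0, by omega⟩ : Fin (n - 1)), true) ∈ u) :
    PresentedGroup.mk (braidRels (n - 1)) (FreeGroup.mk u) ≠ 1 := by
  intro h
  have hrep := congrArg (PresentedGroup.toGroup DehornoyProof.rels_hold) h
  rw [_root_.map_one] at hrep
  change FreeGroup.lift (fun i : Fin (n - 1) => DehornoyProof.art i) (FreeGroup.mk u) = 1 at hrep
  obtain ⟨b, hb, hb'⟩ := DehornoyProof.head_word u (by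
    rintro ⟨i, c⟩ hp h0
    cases c with
    | true => rfl
    | false => exact ((hnonneg (i, false) hp) (Prod.ext (Fin.ext h0) rfl)).elim)
  have hbt := hb' ⟨_, hocc, rfl⟩
  subst hbt
  rw [hrep, MulAut.one_apply, FreeGroup.toWord_inv, FreeGroup.toWord_of] at hb
  simp [FreeGroup.invRev] at hb
end
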